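/- The elliptic fake degree of [λ×∅] in R̄(W(B_n)) equals (q-1)^n · q^{2n(λ)} · Π_{(i,j)∈λ} (1 - q^{2c(i,j)+1})/(1 - q^{2h(i,j)}). -/

import Mathlib

set_option maxHeartbeats 1000000
set_option synthInstance.maxHeartbeats 400000

/-!
STATEMENT 9: the elliptic fake degree of `[λ×∅] ∈ R̄(W(B_n))` equals
`(q-1)^n · q^{2n(λ)} · Π_{(i,j)∈λ} (1-q^{2c(i,j)+1})/(1-q^{2h(i,j)})`.
-/

open scoped BigOperators Classical

noncomputable section

/-- the multiset of fiber sizes of `f : Fin n → ℕ` (over the image of `f`). -/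
def fiberSizes (n : ℕ) (f : Fin n → ℕ) : Multiset ℕ :=
  (Finset.univ.image f).val.map (fun j => (Finset.univ.filter (fun i => f i = j)).card)

/-- the Young subgroup of `S_n` preserving the fibers of `f`. -/
def youngSubgroup (n : ℕ) (f : Fin n → ℕ) : Subgroup (Equiv.Perm (Fin n)) where
  carrier := {w | ∀ i, f (w i) = f i}
  one_mem' := by intro i; rfl
  mul_mem' := by
    intro a b ha hb i
    simpa [Equiv.Perm.mul_apply] using (ha (b i)).trans (hb i)
  inv_mem' := by
    intro a ha i
    simpa using (ha (a⁻¹ i)).symm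

/-- the function on `G` induced from `φ` on the subgroup `H`. -/
def indCF {G : Type} [Group G] [Fintype G] (H : Subgroup G) (φ : G → ℚ) : G → ℚ :=
  fun w => ((Nat.card H : ℚ))⁻¹ *
    ∑ g : G, if g⁻¹ * w * g ∈ H then φ (g⁻¹ * w * g) else 0

/-- the standard character pairing on `S_n` (characters here are real valued). -/
def pairS (n : ℕ) (a b : Equiv.Perm (Fin n) → ℚ) : ℚ :=
  ((n.factorial : ℚ))⁻¹ * ∑ w : Equiv.Perm (Fin n), a w * b w

/-- the multiset of parts of the conjugate (transposed) partition. -/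
def conjParts (n : ℕ) (m : Multiset ℕ) : Multiset ℕ :=
  ((Finset.range n).val.map (fun j => Multiset.card (m.filter (fun a => j < a)))).filter
    (fun a => 0 < a)

/-- `χ` is (the character of) the irreducible representation `σ_λ` of `S_n` attached to
the partition with parts `lam` and conjugate-partition parts `lamT`: it is a genuine
character, has norm one (so is irreducible), and is a common constituent of
`Ind_{S_λ} 1` and `Ind_{S_{λᵗ}} sgn` — which characterizes `σ_λ`. -/
def IsIrrCharOf (n : ℕ) (lam lamT : Multiset ℕ) (χ : Equiv.Perm (Fin n) → ℤ) : Prop :=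
  (∃ V : FDRep ℂ (Equiv.Perm (Fin n)), ∀ g, V.character g = (χ g : ℂ)) ∧
  pairS n (fun w => (χ w : ℚ)) (fun w => (χ w : ℚ)) = 1 ∧
  (∀ f : Fin n → ℕ, fiberSizes n f = lam →
      pairS n (fun w => (χ w : ℚ)) (indCF (youngSubgroup n f) (fun _ => 1)) ≠ 0) ∧
  (∀ f : Fin n → ℕ, fiberSizes n f = lamT →
      pairS n (fun w => (χ w : ℚ))
        (indCF (youngSubgroup n f) (fun w => ((Equiv.Perm.sign w : ℤ) : ℚ))) ≠ 0)

abbrev K : Type := RatFunc ℚ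

/-- an element of `W(B_n)`. -/
abbrev BElt (n : ℕ) := Equiv.Perm (Fin n) × (Fin n → Bool)

/-- the signed permutation matrix of `p ∈ W(B_n)`, over `K = ℚ(q)`. -/
def BMat (n : ℕ) (p : BElt n) : Matrix (Fin n) (Fin n) K :=
  Matrix.of fun i j => if p.1 j = i then (if p.2 j then -1 else 1) else 0

/-- the hook length `h(i,j)` of the box `c = (i,j)` of `μ` (0-indexed). -/
def hookLen (μ : YoungDiagram) (c : ℕ × ℕ) : ℕ :=
  μ.rowLen c.1 + μ.colLen c.2 - c.1 - c.2 - 1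

/-- the content `c(i,j) = j - i` of a box (0-indexed). -/
def content (c : ℕ × ℕ) : ℤ := (c.2 : ℤ) - (c.1 : ℤ)

/-- `n(λ) = Σ_i (i-1) λ_i = Σ_{(i,j)∈λ} i` (0-indexed rows). -/
def nInv (μ : YoungDiagram) : ℕ := ∑ c ∈ μ.cells, c.1

/-!
Frobenius' determinantal virtual character `∑_π sgn π · Ind 1`, the sum running over Young subgroups
with block sizes `λ_i + δ_i - π δ_i`, has norm one. Its scalar product with `χ` is at least one:
unless `π = 1`, no composition with these block sizes is dominated by `λ`, so the symmetrizer of the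
Young subgroup and the antisymmetrizer of `S_{λᵗ}` annihilate each other and Schur's lemma makes the
term vanish. Hence it equals `χ`, and by the Jacobi–Trudi identity `∑_w χ(w) p_w(x) a_δ(x)` is
`n! a_{λ+δ}(x)`.

At `x = (1, t, …, t^{N-1})` the alternants are Vandermonde determinants. Their quotient is given by
hooks and contents, while the power sums are products of `(t^{N|o|} - 1) / (t^{|o|} - 1)` over the
cycles `o` of `w`. For all `N ≥ n` this is one and the same identity at `a = t^N`, polynomial in
`a`, and therefore true for every `a`.

For `w ∈ S_n`, each cycle `o` contributes a factor `(1 + q^{|o|})⁻¹` to `det(1-w)/det(1-qw)` for all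
signings of `w` with `det(1-w) ≠ 0`, and the determinants `det(1-w)` add up to `2^n`. Since
`(1 + q^{|o|})⁻¹ = (q^{|o|} - 1) / (q^{2|o|} - 1)`, the case `t = q²`, `a = q` finishes the proof.
-/

open Finset

section Coloring

variable {α Z : Type*} [Fintype α]

/-- The number of elements to which a coloring `F` gives the color `z`. -/
def fiberCard (F : α → Z) (z : Z) : ℕ := #{a | F a = z}

theorem fiberCard_comp_perm (F : α → Z) (w : Equiv.Perm α) :
    fiberCard (F ∘ w) = fiberCard F := by
  funext z
  exact card_bij (fun a _ => w a) (by simp) (by simp) fun b hb => ⟨w.symm b, by simpa using hb⟩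

theorem exists_perm_comp_eq {F G : α → Z} (h : fiberCard F = fiberCard G) :
    ∃ w : Equiv.Perm α, F ∘ w = G := by
  have fiber_equiv (z : Z) : Nonempty ({a // G a = z} ≃ {a // F a = z}) := by
    rw [← Fintype.card_eq, Fintype.card_subtype, Fintype.card_subtype]
    exact (congrFun h z).symm
  let e z := (fiber_equiv z).some
  exact ⟨(Equiv.sigmaFiberEquiv G).symm.trans
    ((Equiv.sigmaCongrRight e).trans (Equiv.sigmaFiberEquiv F)),
    funext fun a => (e (G a) ⟨a, rfl⟩).2⟩

theorem sum_fiberCard_mk [Fintype Z] {κ : Type*} (F : α → κ × Z) (i : κ) :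
    ∑ z, fiberCard F (i, z) = fiberCard (fun a => (F a).1) i := by
  rw [fiberCard, card_eq_sum_card_fiberwise (t := univ) (f := fun a => (F a).2) (by simp)]
  refine sum_congr rfl fun z _ => ?_
  simp only [fiberCard, filter_filter, Prod.ext_iff]

theorem exists_fiberCard_eq [Fintype Z] {A : Z → ℕ} (hA : ∑ z, A z = Fintype.card α) :
    ∃ F : α → Z, fiberCard F = A := by
  obtain ⟨e⟩ : Nonempty (α ≃ Σ z, Fin (A z)) := by
    rw [← Fintype.card_eq]; simp [hA]
  refine ⟨fun a => (e a).1, funext fun z => ?_⟩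
  have fiber_equiv : {a // (e a).1 = z} ≃ Fin (A z) :=
    (e.subtypeEquiv (q := fun y => y.1 = z) fun _ => Iff.rfl).trans (Equiv.sigmaSubtype z)
  rw [fiberCard, ← Fintype.card_subtype, Fintype.card_congr fiber_equiv, Fintype.card_fin]

theorem prod_comp_eq_prod_pow_fiberCard [Fintype Z] {R : Type*} [CommMonoid R] (x : Z → R)
    (F : α → Z) : ∏ a, x (F a) = ∏ z, x z ^ fiberCard F z := by
  rw [← prod_fiberwise' univ F x]
  simp [fiberCard]

end Coloring

section YoungCharacter

variable {α ι : Type*} [Fintype α] [DecidableEq α] [Fintype ι]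

/-- The value at `w` of the permutation character of `Perm α` on the colorings of `α` with `a i`
points of color `i`, that is, of the representation induced from the trivial representation of a
Young subgroup. It is zero when some `a i` is negative. -/
def youngCharacter (a : ι → ℤ) (w : Equiv.Perm α) : ℤ :=
  #{F : α → ι | (∀ i, (fiberCard F i : ℤ) = a i) ∧ F ∘ w = F}

theorem youngCharacter_eq_zero {a : ι → ℤ} {i : ι} (hi : a i < 0) (w : Equiv.Perm α) :
    youngCharacter a w = 0 := by
  rw [youngCharacter, Nat.cast_eq_zero, card_eq_zero, filter_eq_empty_iff]
  rintro F - ⟨hF, -⟩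
  have := hF i
  omega

theorem youngCharacter_natCast (A : ι → ℕ) (w : Equiv.Perm α) :
    youngCharacter (fun i => (A i : ℤ)) w =
      ∑ F : α → ι, if fiberCard F = A ∧ F ∘ w = F then 1 else 0 := by
  simp only [youngCharacter, Nat.cast_inj, ← funext_iff, sum_boole]

/-- Colorings with prescribed fiber sizes form one orbit, so Burnside's count applies. -/
theorem sum_youngCharacter {A : ι → ℕ} (hA : ∑ i, A i = Fintype.card α) :
    ∑ w : Equiv.Perm α, youngCharacter (fun i => (A i : ℤ)) w = (Fintype.card α).factorial := by
  obtain ⟨F₀, hF₀⟩ := exists_fiberCard_eq hA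
  have translate (F : α → ι) :
      ∑ w : Equiv.Perm α, (if fiberCard F = A ∧ F ∘ w = F then (1 : ℤ) else 0) =
        ∑ w : Equiv.Perm α, if F₀ ∘ w = F then 1 else 0 := by
    by_cases hF : fiberCard F = A
    · obtain ⟨u, rfl⟩ := exists_perm_comp_eq (hF₀.trans hF.symm)
      exact Fintype.sum_equiv (Equiv.mulLeft u) _ _ fun w => by
        simp only [hF, true_and]
        rfl
    · have (w : Equiv.Perm α) : F₀ ∘ w ≠ F := by
        rintro rfl
        exact hF ((fiberCard_comp_perm F₀ w).trans hF₀)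
      simp [hF, this]
  simp only [youngCharacter_natCast]
  rw [sum_comm, sum_congr rfl fun F _ => translate F, sum_comm]
  simp [Fintype.card_perm]

end YoungCharacter

section PowerSum

variable {α κ R : Type*} [CommRing R]

/-- The cycles of a permutation, fixed points included. -/
abbrev Cycles (w : Equiv.Perm α) : Type _ := Quotient (Equiv.Perm.SameCycle.setoid w)

theorem Cycles.mk_apply (w : Equiv.Perm α) (a : α) :
    (⟦w a⟧ : Cycles w) = ⟦a⟧ :=
  Quotient.sound (Equiv.Perm.sameCycle_apply_left.2 (Equiv.Perm.SameCycle.refl w a))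

theorem comp_eq_self_iff_exists_cycles (w : Equiv.Perm α) (F : α → κ) :
    F ∘ w = F ↔ ∃ c : Cycles w → κ, F = fun a => c ⟦a⟧ := by
  constructor
  · intro h
    have h_zpow (k : ℤ) (a : α) : F ((w ^ k) a) = F a := by
      induction k using Int.induction_on generalizing a with
      | zero => rfl
      | succ k ih => rw [zpow_add_one, Equiv.Perm.mul_apply, ih]; exact congrFun h a
      | pred k ih =>
        rw [zpow_sub_one, Equiv.Perm.mul_apply, ih]
        simpa using (congrFun h (w⁻¹ a)).symm
    refine ⟨Quotient.lift F ?_, rfl⟩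
    rintro a _ ⟨k, rfl⟩
    exact (h_zpow k a).symm
  · rintro ⟨c, rfl⟩
    exact funext fun a => congrArg c (Cycles.mk_apply w a)

variable [Fintype α]

/-- The number of elements of a cycle. -/
def Cycles.length {w : Equiv.Perm α} (o : Cycles w) : ℕ :=
  fiberCard (fun a => (⟦a⟧ : Cycles w)) o

theorem Cycles.card_filter_mk_eq {w : Equiv.Perm α} (o : Cycles w) :
    #{a | (⟦a⟧ : Cycles w) = o} = o.length := by
  unfold Cycles.length fiberCard
  congr

theorem Cycles.length_pos {w : Equiv.Perm α} (o : Cycles w) : 0 < o.length :=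
  card_pos.2 <| o.inductionOn fun a => ⟨a, by simp⟩

variable [DecidableEq α] [Fintype κ]

/-- The power sum symmetric polynomial `p_ν` in the variables `x`, where `ν` is the cycle type
of `w`. -/
def cyclePowerSum (w : Equiv.Perm α) (x : κ → R) : R :=
  ∏ o : Cycles w, ∑ i, x i ^ o.length

theorem cyclePowerSum_eq_sum (w : Equiv.Perm α) (x : κ → R) :
    cyclePowerSum w x = ∑ F : α → κ, if F ∘ w = F then ∏ a, x (F a) else 0 := by
  rw [cyclePowerSum, prod_univ_sum, Fintype.piFinset_univ, ← sum_filter]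
  refine sum_bij (fun c _ a => c ⟦a⟧) ?_ ?_ ?_ ?_
  · intro c _
    exact mem_filter.2 ⟨mem_univ _, (comp_eq_self_iff_exists_cycles w _).2 ⟨c, rfl⟩⟩
  · intro c _ c' _ h
    exact funext fun o => o.inductionOn fun a => congrFun h a
  · intro F hF
    obtain ⟨c, rfl⟩ := (comp_eq_self_iff_exists_cycles w F).1 (mem_filter.1 hF).2
    exact ⟨c, mem_univ _, rfl⟩
  · intro c _
    exact (prod_comp_eq_prod_pow_fiberCard (fun o => x (c o)) _).symm

end PowerSum

section CompleteHomogeneous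

variable {κ R : Type*} [Fintype κ] [CommRing R]

/-- The complete homogeneous symmetric polynomial `h_m` in the variables `x`, with `h_m = 0`
for `m < 0`. -/
def completeHomogeneous (x : κ → R) (m : ℤ) : R :=
  if m < 0 then 0 else ∑ a ∈ piAntidiag univ m.toNat, ∏ i, x i ^ a i

theorem completeHomogeneous_of_neg (x : κ → R) {m : ℤ} (hm : m < 0) :
    completeHomogeneous x m = 0 := if_pos hm

theorem completeHomogeneous_natCast (x : κ → R) (m : ℕ) :
    completeHomogeneous x m = ∑ a ∈ piAntidiag univ m, ∏ i, x i ^ a i := by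
  simp [completeHomogeneous]

theorem completeHomogeneous_eq_coeff (x : κ → R) (m : ℕ) :
    completeHomogeneous x m =
      PowerSeries.coeff m (∏ i, PowerSeries.mk fun k => x i ^ k) := by
  rw [completeHomogeneous_natCast, PowerSeries.coeff_prod]
  simp only [PowerSeries.coeff_mk]
  symm
  refine sum_bij' (fun l _ => (l : κ → ℕ)) (fun a _ => Finsupp.equivFunOnFinite.symm a)
    ?_ ?_ ?_ ?_ ?_ <;> simp [mem_finsuppAntidiag]

variable {α ι : Type*} [Fintype α] [DecidableEq α] [Fintype ι]

theorem youngCharacter_mul_cyclePowerSum_eq_sum_coloring (a : ι → ℕ) (w : Equiv.Perm α)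
    (x : κ → R) :
    (youngCharacter (fun i => (a i : ℤ)) w : R) * cyclePowerSum w x =
      ∑ F : α → ι × κ, if fiberCard (fun b => (F b).1) = a ∧ F ∘ w = F
        then ∏ b, x (F b).2 else 0 := by
  have pair_comp (f : α → ι) (g : α → κ) :
      (fun a => (f a, g a)) ∘ w = (fun a => (f a, g a)) ↔ f ∘ w = f ∧ g ∘ w = g := by
    simp [funext_iff, forall_and]
  rw [youngCharacter_natCast, cyclePowerSum_eq_sum, Int.cast_sum, sum_mul_sum,
    ← Fintype.sum_prod_type']
  refine Fintype.sum_equiv (Equiv.arrowProdEquivProdArrow α (fun _ => ι) (fun _ => κ)).symm _ _ ?_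
  rintro ⟨f, g⟩
  simp only [Equiv.arrowProdEquivProdArrow, Equiv.coe_fn_symm_mk, pair_comp]
  by_cases hf : f ∘ w = f <;> by_cases hg : g ∘ w = g <;> simp [hf, hg]

theorem youngCharacter_mul_cyclePowerSum (a : ι → ℕ) (w : Equiv.Perm α) (x : κ → R) :
    (youngCharacter (fun i => (a i : ℤ)) w : R) * cyclePowerSum w x =
      ∑ A ∈ Fintype.piFinset fun i => piAntidiag (univ : Finset κ) (a i),
        (youngCharacter (fun p : ι × κ => (A p.1 p.2 : ℤ)) w : R) * ∏ i, ∏ j, x j ^ A i j := by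
  have mem_rows {A : ι → κ → ℕ} :
      A ∈ Fintype.piFinset (fun i => piAntidiag (univ : Finset κ) (a i)) ↔
        ∀ i, ∑ j, A i j = a i := by
    simp [Fintype.mem_piFinset, mem_piAntidiag]
  have summand_eq (F : α → ι × κ) :
      (∑ A ∈ Fintype.piFinset fun i => piAntidiag (univ : Finset κ) (a i),
        (if fiberCard F = (fun p => A p.1 p.2) ∧ F ∘ w = F then 1 else 0) *
          ∏ i, ∏ j, x j ^ A i j) =
      if fiberCard (fun b => (F b).1) = a ∧ F ∘ w = F then ∏ b, x (F b).2 else 0 := by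
    by_cases hF : fiberCard (fun b => (F b).1) = a ∧ F ∘ w = F
    · have mem : (fun i j => fiberCard F (i, j)) ∈
          Fintype.piFinset fun i => piAntidiag (univ : Finset κ) (a i) :=
        mem_rows.2 fun i => by rw [← hF.1, sum_fiberCard_mk]
      rw [sum_eq_single_of_mem _ mem, if_pos hF, if_pos ⟨rfl, hF.2⟩, one_mul,
        prod_comp_eq_prod_pow_fiberCard (fun p : ι × κ => x p.2), Fintype.prod_prod_type]
      intro A _ hA
      rw [if_neg fun h => hA (funext₂ fun i j => (congrFun h.1 (i, j)).symm), zero_mul]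
    · rw [if_neg hF]
      refine sum_eq_zero fun A hA => ?_
      rw [if_neg, zero_mul]
      rintro ⟨hFA, hw⟩
      refine hF ⟨funext fun i => ?_, hw⟩
      rw [← sum_fiberCard_mk, hFA, mem_rows.1 hA i]
  rw [youngCharacter_mul_cyclePowerSum_eq_sum_coloring]
  simp only [← summand_eq, youngCharacter_natCast, Int.cast_sum, sum_mul]
  rw [sum_comm]
  simp

theorem sum_youngCharacter_mul_cyclePowerSum (a : ι → ℤ) (ha : ∑ i, a i = Fintype.card α)
    (x : κ → R) :
    ∑ w : Equiv.Perm α, (youngCharacter a w : R) * cyclePowerSum w x =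
      (Fintype.card α).factorial * ∏ i, completeHomogeneous x (a i) := by
  by_cases hneg : ∃ i, a i < 0
  · obtain ⟨i, hi⟩ := hneg
    rw [prod_eq_zero (mem_univ i) (completeHomogeneous_of_neg x hi)]
    simp [youngCharacter_eq_zero hi]
  push Not at hneg
  lift a to ι → ℕ using hneg
  have row_sum {A : ι → κ → ℕ}
      (hA : A ∈ Fintype.piFinset fun i => piAntidiag (univ : Finset κ) (a i)) :
      ∑ p : ι × κ, A p.1 p.2 = Fintype.card α := by
    rw [Fintype.sum_prod_type, ← Nat.cast_inj (R := ℤ), ← ha, Nat.cast_sum]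
    exact sum_congr rfl fun i _ =>
      congrArg _ (mem_piAntidiag.1 (Fintype.mem_piFinset.1 hA i)).1
  simp only [youngCharacter_mul_cyclePowerSum, completeHomogeneous_natCast, prod_univ_sum, mul_sum]
  rw [sum_comm]
  refine sum_congr rfl fun A hA => ?_
  rw [← sum_mul, ← Int.cast_sum, sum_youngCharacter (row_sum hA), Int.cast_natCast]

end CompleteHomogeneous

section JacobiTrudi

variable {N : ℕ} {R : Type*} [CommRing R]

/-- The alternant `det (x_k ^ l_i)`. For `l i = i` it is the Vandermonde determinant. -/
def alternant (x : Fin N → R) (l : Fin N → ℕ) : R :=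
  (Matrix.of fun i k => x k ^ l i).det

/-- The generating polynomial, up to signs, of the elementary symmetric polynomials in all the
variables but `x k`. -/
def omitProd (x : Fin N → R) (k : Fin N) : Polynomial R :=
  ∏ i ∈ univ.erase k, (1 - Polynomial.C (x i) * Polynomial.X)

theorem natDegree_omitProd_lt (x : Fin N → R) (k : Fin N) : (omitProd x k).natDegree < N := by
  refine (Polynomial.natDegree_prod_le _ _).trans_lt ?_
  have degree_factor (i : Fin N) :
      (1 - Polynomial.C (x i) * Polynomial.X : Polynomial R).natDegree ≤ 1 := by
    compute_degree
  refine (sum_le_sum fun i _ => degree_factor i).trans_lt ?_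
  simpa using k.pos

theorem mk_pow_mul_one_sub (a : R) :
    PowerSeries.mk (fun k => a ^ k) *
      ((1 - Polynomial.C a * Polynomial.X : Polynomial R) : PowerSeries R) = 1 := by
  push_cast
  ext m
  rw [mul_sub, mul_one, ← mul_assoc, map_sub]
  cases m with
  | zero => simp
  | succ m => simp [PowerSeries.coeff_succ_mul_X, PowerSeries.coeff_one, pow_succ]

theorem prod_mk_pow_mul_omitProd (x : Fin N → R) (k : Fin N) :
    (∏ i, PowerSeries.mk fun m => x i ^ m) * (omitProd x k : PowerSeries R) =
      PowerSeries.mk fun m => x k ^ m := by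
  have coe_omitProd : (omitProd x k : PowerSeries R) = ∏ i ∈ univ.erase k,
      ((1 - Polynomial.C (x i) * Polynomial.X : Polynomial R) : PowerSeries R) := by
    simp only [omitProd, ← Polynomial.coeToPowerSeries.ringHom_apply, map_prod]
  rw [← mul_prod_erase _ _ (mem_univ k), mul_assoc, coe_omitProd, ← prod_mul_distrib]
  simp only [mk_pow_mul_one_sub, prod_const_one, mul_one]

theorem completeHomogeneous_sub_eq_coeff (x : Fin N → R) (m r : ℕ) :
    completeHomogeneous x ((m : ℤ) - r) = PowerSeries.coeff m
      ((∏ i, PowerSeries.mk fun k => x i ^ k) * PowerSeries.X ^ r) := by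
  rw [PowerSeries.coeff_mul_X_pow']
  split_ifs with h
  · rw [← Nat.cast_sub h, completeHomogeneous_eq_coeff]
  · exact completeHomogeneous_of_neg x (by omega)

theorem pow_eq_sum_completeHomogeneous (x : Fin N → R) (k : Fin N) (m : ℕ) :
    x k ^ m = ∑ r : Fin N, completeHomogeneous x ((m : ℤ) - (r : ℕ)) * (omitProd x k).coeff r := by
  have expand : (omitProd x k : PowerSeries R) =
      ∑ r : Fin N, PowerSeries.C ((omitProd x k).coeff r) * PowerSeries.X ^ (r : ℕ) := by
    conv_lhs => rw [(omitProd x k).as_sum_range_C_mul_X_pow' (natDegree_omitProd_lt x k)]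
    rw [Fin.sum_univ_eq_sum_range
      fun r => PowerSeries.C ((omitProd x k).coeff r) * PowerSeries.X ^ r,
      ← Polynomial.coeToPowerSeries.ringHom_apply, map_sum]
    simp
  calc x k ^ m
      = PowerSeries.coeff m (PowerSeries.mk fun m => x k ^ m) := by rw [PowerSeries.coeff_mk]
    _ = _ := by
      rw [← prod_mk_pow_mul_omitProd, expand, mul_sum, map_sum]
      refine sum_congr rfl fun r _ => ?_
      rw [completeHomogeneous_sub_eq_coeff, mul_left_comm, PowerSeries.coeff_C_mul, mul_comm]

theorem alternant_eq_det_mul (x : Fin N → R) (l : Fin N → ℕ) :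
    alternant x l =
      (Matrix.of fun i j : Fin N => completeHomogeneous x ((l i : ℤ) - (j : ℕ))).det *
        (Matrix.of fun j k : Fin N => (omitProd x k).coeff j).det := by
  rw [alternant, ← Matrix.det_mul]
  congr 1
  ext i k
  exact pow_eq_sum_completeHomogeneous x k (l i)

theorem det_completeHomogeneous_sub_eq_one (x : Fin N → R) :
    (Matrix.of fun i j : Fin N => completeHomogeneous x (((i : ℕ) : ℤ) - (j : ℕ))).det = 1 := by
  rw [Matrix.det_of_isLowerTriangular]
  · refine prod_eq_one fun i _ => ?_
    rw [Matrix.of_apply, sub_self]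
    simpa using completeHomogeneous_natCast x 0
  · intro i j hij
    have : (i : ℕ) < j := hij
    exact completeHomogeneous_of_neg x (by omega)

/-- The Jacobi–Trudi identity. -/
theorem det_completeHomogeneous_mul_alternant (x : Fin N → R) (l : Fin N → ℕ) :
    (Matrix.of fun i j : Fin N => completeHomogeneous x ((l i : ℤ) - (j : ℕ))).det *
      alternant x (fun i => i) = alternant x l := by
  rw [alternant_eq_det_mul x l, alternant_eq_det_mul x fun i => i,
    det_completeHomogeneous_sub_eq_one, one_mul]

end JacobiTrudi

section FrobeniusCharacter

variable {N : ℕ} {α : Type*} [Fintype α] [DecidableEq α]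

/-- The virtual character of `Perm α` attached by Frobenius to the Schur function
`alternant x l / alternant x (0, 1, …, N - 1)`. -/
def frobeniusCharacter (l : Fin N → ℕ) (w : Equiv.Perm α) : ℤ :=
  ∑ π : Equiv.Perm (Fin N), (Equiv.Perm.sign π : ℤ) *
    youngCharacter (fun i => (l i : ℤ) - (π i : ℕ)) w

theorem sum_frobeniusCharacter_mul_cyclePowerSum {κ R : Type*} [Fintype κ] [CommRing R]
    (x : κ → R) {l : Fin N → ℕ} (hl : ∑ i, l i = Fintype.card α + ∑ i : Fin N, (i : ℕ)) :
    ∑ w : Equiv.Perm α, (frobeniusCharacter l w : R) * cyclePowerSum w x =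
      (Fintype.card α).factorial *
        (Matrix.of fun i j : Fin N => completeHomogeneous x ((l i : ℤ) - (j : ℕ))).det := by
  have sum_shift (π : Equiv.Perm (Fin N)) :
      ∑ i, ((l i : ℤ) - (π i : ℕ)) = Fintype.card α := by
    rw [sum_sub_distrib, Equiv.sum_comp π fun i : Fin N => ((i : ℕ) : ℤ)]
    exact sub_eq_of_eq_add (mod_cast hl)
  simp only [frobeniusCharacter, Int.cast_sum, Int.cast_mul, mul_assoc, sum_mul]
  rw [sum_comm, ← Matrix.det_transpose, Matrix.det_apply', mul_sum]
  refine sum_congr rfl fun π _ => ?_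
  rw [← mul_sum, sum_youngCharacter_mul_cyclePowerSum _ (sum_shift π), mul_left_comm]
  rfl

/-- Frobenius' character formula. -/
theorem sum_frobeniusCharacter_mul_alternant {R : Type*} [CommRing R] (x : Fin N → R)
    {l : Fin N → ℕ} (hl : ∑ i, l i = Fintype.card α + ∑ i : Fin N, (i : ℕ)) :
    (∑ w : Equiv.Perm α, (frobeniusCharacter l w : R) * cyclePowerSum w x) *
        alternant x (fun i => i) =
      (Fintype.card α).factorial * alternant x l := by
  rw [sum_frobeniusCharacter_mul_cyclePowerSum x hl, mul_assoc,
    det_completeHomogeneous_mul_alternant]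

theorem prod_X_pow_eq_monomial_univ {κ : Type*} [Fintype κ] (b : κ → ℕ) :
    ∏ i, (MvPolynomial.X i : MvPolynomial κ ℤ) ^ b i =
      MvPolynomial.monomial (Finsupp.equivFunOnFinite.symm b) 1 := by
  simp [MvPolynomial.monomial_eq, Finsupp.prod_fintype]

theorem coeff_cyclePowerSum_X {κ : Type*} [Fintype κ] (w : Equiv.Perm α) (m : κ →₀ ℕ) :
    MvPolynomial.coeff m (cyclePowerSum w (MvPolynomial.X : κ → MvPolynomial κ ℤ)) =
      youngCharacter (fun i => (m i : ℤ)) w := by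
  rw [cyclePowerSum_eq_sum, MvPolynomial.coeff_sum, youngCharacter_natCast]
  refine sum_congr rfl fun F _ => ?_
  have coe_eq_iff : Finsupp.equivFunOnFinite.symm (fiberCard F) = m ↔ fiberCard F = m :=
    Equiv.symm_apply_eq _
  rw [prod_comp_eq_prod_pow_fiberCard, prod_X_pow_eq_monomial_univ]
  by_cases hF : F ∘ w = F <;> simp [hF, MvPolynomial.coeff_monomial, coe_eq_iff]

theorem alternant_X (l : Fin N → ℕ) :
    alternant (MvPolynomial.X : Fin N → MvPolynomial (Fin N) ℤ) l =
      ∑ π : Equiv.Perm (Fin N), MvPolynomial.monomial (Finsupp.equivFunOnFinite.symm (l ∘ π))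
        (Equiv.Perm.sign π : ℤ) := by
  rw [alternant, Matrix.det_apply']
  refine sum_congr rfl fun π _ => ?_
  rw [← mul_one (Equiv.Perm.sign π : ℤ), ← MvPolynomial.C_mul_monomial,
    ← prod_X_pow_eq_monomial_univ]
  simp

theorem coeff_cyclePowerSum_mul_alternant_X (l : Fin N → ℕ) (w : Equiv.Perm α) :
    MvPolynomial.coeff (Finsupp.equivFunOnFinite.symm l)
      (cyclePowerSum w MvPolynomial.X * alternant MvPolynomial.X fun i : Fin N => (i : ℕ)) =
        frobeniusCharacter l w := by
  rw [alternant_X, mul_sum, MvPolynomial.coeff_sum]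
  refine sum_congr rfl fun π _ => ?_
  rw [MvPolynomial.coeff_mul_monomial', coeff_cyclePowerSum_X, mul_comm]
  split_ifs with hle
  · congr 2
    exact funext fun i => Nat.cast_sub (hle i)
  · obtain ⟨i, hi⟩ : ∃ i, l i < π i := by
      simpa [Finsupp.le_def] using hle
    rw [youngCharacter_eq_zero (i := i) (by omega), mul_zero]

theorem coeff_alternant_X {l : Fin N → ℕ} (hl : Function.Injective l) :
    MvPolynomial.coeff (Finsupp.equivFunOnFinite.symm l)
      (alternant (MvPolynomial.X : Fin N → MvPolynomial (Fin N) ℤ) l) = 1 := by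
  rw [alternant_X, MvPolynomial.coeff_sum, sum_eq_single_of_mem 1 (mem_univ _)]
  · simp
  · intro π _ hπ
    rw [MvPolynomial.coeff_monomial, if_neg]
    intro h
    refine hπ (Equiv.ext fun i => hl ?_)
    exact congrFun (Finsupp.equivFunOnFinite.symm.injective h) i

theorem sum_frobeniusCharacter_mul_self {l : Fin N → ℕ} (hl : Function.Injective l)
    (hsum : ∑ i, l i = Fintype.card α + ∑ i : Fin N, (i : ℕ)) :
    ∑ w : Equiv.Perm α, frobeniusCharacter l w * frobeniusCharacter l w =
      (Fintype.card α).factorial := by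
  have h := congrArg (MvPolynomial.coeff (Finsupp.equivFunOnFinite.symm l))
    (sum_frobeniusCharacter_mul_alternant (R := MvPolynomial (Fin N) ℤ) MvPolynomial.X hsum)
  simp only [sum_mul, mul_assoc, ← MvPolynomial.C_eq_coe_nat,
    ← eq_intCast (MvPolynomial.C : ℤ →+* MvPolynomial (Fin N) ℤ), MvPolynomial.coeff_sum,
    MvPolynomial.coeff_C_mul, coeff_cyclePowerSum_mul_alternant_X, coeff_alternant_X hl,
    mul_one] at h
  exact h

end FrobeniusCharacter

section TwistedSum

variable {k G V : Type*} [Field k] [Group G] [AddCommGroup V] [Module k V]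
  (ρ : Representation k G V)

variable {ρ} in
theorem exists_eq_smul_one_of_commute
    (hρ : Module.finrank k (Representation.IntertwiningMap ρ ρ) = 1) {T : Module.End k V}
    (hT : ∀ g, T * ρ g = ρ g * T) : ∃ c : k, T = c • 1 := by
  cases subsingleton_or_nontrivial V
  · exact ⟨0, Subsingleton.elim _ _⟩
  let T' : Representation.IntertwiningMap ρ ρ := ⟨T, hT⟩
  let I : Representation.IntertwiningMap ρ ρ := ⟨LinearMap.id, fun _ => rfl⟩
  have hI : I ≠ 0 := fun h => one_ne_zero (α := Module.End k V)
    (congrArg Representation.IntertwiningMap.toLinearMap h)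
  obtain ⟨c, hc⟩ := (finrank_eq_one_iff_of_nonzero' I hI).1 hρ T'
  exact ⟨c, (congrArg Representation.IntertwiningMap.toLinearMap hc).symm⟩

variable {ρ} in
/-- Averaging `B` over conjugation gives a scalar, which is nonzero because its trace is. -/
theorem eq_zero_of_forall_mul_apply_mul_eq_zero [Finite G] [CharZero k]
    (hρ : Module.finrank k (Representation.IntertwiningMap ρ ρ) = 1) {A B : Module.End k V}
    (hAB : ∀ g, A * ρ g * B = 0) (hB : LinearMap.trace k V B ≠ 0) : A = 0 := by
  cases nonempty_fintype G
  let T : Module.End k V := ∑ g, ρ g * B * ρ g⁻¹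
  have commute_T (v : G) : T * ρ v = ρ v * T := by
    rw [mul_sum, sum_mul]
    symm
    refine Fintype.sum_equiv (Equiv.mulLeft v) _ _ fun g => ?_
    simp only [Equiv.coe_mulLeft, mul_inv_rev, map_mul, mul_assoc]
    rw [← map_mul ρ v⁻¹ v, inv_mul_cancel, map_one, mul_one]
  have trace_T : LinearMap.trace k V T = Fintype.card G * LinearMap.trace k V B := by
    have trace_conj (g : G) : LinearMap.trace k V (ρ g * B * ρ g⁻¹) = LinearMap.trace k V B := by
      rw [LinearMap.trace_mul_comm, ← mul_assoc, ← map_mul, inv_mul_cancel, map_one, one_mul]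
    simp [T, trace_conj]
  obtain ⟨c, hc⟩ := exists_eq_smul_one_of_commute hρ commute_T
  have hc_ne : c ≠ 0 := by
    rintro rfl
    rw [hc, zero_smul, map_zero] at trace_T
    exact mul_ne_zero (Nat.cast_ne_zero.2 Fintype.card_ne_zero) hB trace_T.symm
  have mul_T : A * T = 0 := by
    simp only [T, mul_sum, ← mul_assoc, hAB, zero_mul, sum_const_zero]
  rw [hc, mul_smul_comm, mul_one] at mul_T
  exact (smul_eq_zero.1 mul_T).resolve_left hc_ne

variable [Fintype G]

/-- The action of `∑ h ∈ H, θ h • h`, which is up to scaling the projection onto the vectors on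
which `H` acts through the sign character `θ`. -/
def twistedSum (θ : G →* ℤˣ) (H : Subgroup G) : Module.End k V :=
  ∑ h : H, θ h • ρ h

theorem twistedSum_mul_apply (θ : G →* ℤˣ) {H : Subgroup G} {s : G} (hs : s ∈ H) :
    twistedSum ρ θ H * ρ s = θ s • twistedSum ρ θ H := by
  rw [twistedSum, sum_mul, smul_sum]
  refine Fintype.sum_equiv (Equiv.mulRight ⟨s, hs⟩) _ _ fun h => ?_
  simp only [Equiv.coe_mulRight, Subgroup.coe_mul, map_mul, smul_mul_assoc, smul_smul]
  rw [mul_left_comm, Int.units_mul_self, mul_one]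

theorem apply_mul_twistedSum (θ : G →* ℤˣ) {H : Subgroup G} {s : G} (hs : s ∈ H) :
    ρ s * twistedSum ρ θ H = θ s • twistedSum ρ θ H := by
  rw [twistedSum, mul_sum, smul_sum]
  refine Fintype.sum_equiv (Equiv.mulLeft ⟨s, hs⟩) _ _ fun h => ?_
  simp only [Equiv.coe_mulLeft, Subgroup.coe_mul, map_mul, mul_smul_comm, smul_smul]
  rw [← mul_assoc, Int.units_mul_self, one_mul]

/-- Moving `s` from the left factor across `u` to the right one changes the sign of the product. -/
theorem twistedSum_mul_apply_mul_twistedSum [CharZero k] {θ θ' : G →* ℤˣ} {H H' : Subgroup G}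
    {s u : G} (hs : s ∈ H) (hs' : u⁻¹ * s * u ∈ H') (hθ : θ s ≠ θ' s) :
    twistedSum ρ θ H * ρ u * twistedSum ρ θ' H' = 0 := by
  have conj_eq : θ' (u⁻¹ * s * u) = θ' s := by
    rw [map_mul, map_mul, map_inv, mul_right_comm, inv_mul_cancel, one_mul]
  have swap_eq : ρ s * ρ u = ρ u * ρ (u⁻¹ * s * u) := by
    rw [← map_mul, ← map_mul]; group
  have smul_eq : θ s • (twistedSum ρ θ H * ρ u * twistedSum ρ θ' H') =
      θ' s • (twistedSum ρ θ H * ρ u * twistedSum ρ θ' H') := by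
    calc θ s • (twistedSum ρ θ H * ρ u * twistedSum ρ θ' H')
        = twistedSum ρ θ H * (ρ s * ρ u) * twistedSum ρ θ' H' := by
          rw [← mul_assoc, twistedSum_mul_apply ρ θ hs, smul_mul_assoc, smul_mul_assoc]
      _ = twistedSum ρ θ H * ρ u * (ρ (u⁻¹ * s * u) * twistedSum ρ θ' H') := by
          rw [swap_eq]; simp only [mul_assoc]
      _ = _ := by rw [apply_mul_twistedSum ρ θ' hs', conj_eq, mul_smul_comm]
  rw [Int.units_ne_iff_eq_neg.1 hθ, Units.neg_smul, neg_eq_iff_add_eq_zero, ← two_nsmul] at smul_eq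
  have smul_zero := (smul_eq_zero.1 ((Nat.cast_smul_eq_nsmul k 2 _).trans smul_eq)).resolve_left
    (Nat.cast_ne_zero.2 two_ne_zero)
  exact (smul_eq_zero_iff_eq _).1 smul_zero

theorem trace_twistedSum (θ : G →* ℤˣ) (H : Subgroup G) :
    LinearMap.trace k V (twistedSum ρ θ H) = ∑ h : H, ((θ h : ℤ) : k) * ρ.character h := by
  rw [twistedSum, map_sum]
  refine sum_congr rfl fun h _ => ?_
  rw [Units.smul_def, map_zsmul, zsmul_eq_mul]
  rfl

variable {ρ}

variable [CharZero k] [FiniteDimensional k V] {χ : G → ℤ}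

theorem card_le_sum_of_sum_ne_zero (hχ : ∀ g, ρ.character g = χ g) {H : Subgroup G}
    (hH : ∑ h : H, χ h ≠ 0) : (Nat.card H : ℤ) ≤ ∑ h : H, χ h := by
  have card_ne : (Nat.card H : k) ≠ 0 := Nat.cast_ne_zero.2 Nat.card_pos.ne'
  obtain ⟨d, hd⟩ : ∃ d : ℕ, ∑ h : H, χ h = Nat.card H * d := by
    have h := Representation.card_inv_mul_sum_char_eq_finrank (ρ.comp H.subtype)
    rw [inv_mul_eq_iff_eq_mul₀ card_ne] at h
    refine ⟨Module.finrank k (Representation.invariants (ρ.comp H.subtype)),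
      Int.cast_injective (α := k) ?_⟩
    push_cast
    simp only [← hχ]
    exact h
  have d_pos : 1 ≤ d := Nat.one_le_iff_ne_zero.2 fun h => hH (by simp [hd, h])
  rw [hd]
  exact_mod_cast Nat.le_mul_of_pos_right _ d_pos

theorem finrank_intertwiningMap_eq_one (hχ : ∀ g, ρ.character g = χ g)
    (hnorm : ∑ g, χ g * χ g = Fintype.card G) (hinv : ∀ g, χ g⁻¹ = χ g) :
    Module.finrank k (Representation.IntertwiningMap ρ ρ) = 1 := by
  have card_ne : (Nat.card G : k) ≠ 0 := Nat.cast_ne_zero.2 Nat.card_pos.ne'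
  have h := Representation.card_inv_mul_sum_char_mul_char_eq_finrank ρ ρ
  have cast_norm : ∑ g, (χ g * χ g : k) = Nat.card G := by
    rw [Nat.card_eq_fintype_card]; exact_mod_cast hnorm
  simp only [hχ, hinv, cast_norm, inv_mul_cancel₀ card_ne] at h
  exact_mod_cast h.symm

/-- The product of the symmetrizer of `H` and the `θ`-antisymmetrizer of `H'` vanishes even with a
group element in between, so by Schur's lemma one of the two factors does. -/
theorem sum_eq_zero_of_twisted_sum_ne_zero (hχ : ∀ g, ρ.character g = χ g)
    (hnorm : ∑ g, χ g * χ g = Fintype.card G) (hinv : ∀ g, χ g⁻¹ = χ g)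
    {θ : G →* ℤˣ} {H H' : Subgroup G}
    (hHH' : ∀ u : G, ∃ s ∈ H, u⁻¹ * s * u ∈ H' ∧ θ s ≠ 1)
    (hH' : ∑ h : H', (θ h : ℤ) * χ h ≠ 0) : ∑ h : H, χ h = 0 := by
  have trace_ne : LinearMap.trace k V (twistedSum ρ θ H') ≠ 0 := by
    simp only [trace_twistedSum, hχ]
    exact_mod_cast hH'
  have twistedSum_eq : twistedSum ρ 1 H = 0 := by
    refine eq_zero_of_forall_mul_apply_mul_eq_zero
      (finrank_intertwiningMap_eq_one hχ hnorm hinv) (fun u => ?_) trace_ne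
    obtain ⟨s, hs, hs', hθ⟩ := hHH' u
    exact twistedSum_mul_apply_mul_twistedSum ρ hs hs' hθ.symm
  have h := trace_twistedSum ρ 1 H
  simp only [twistedSum_eq, map_zero, hχ, MonoidHom.one_apply, Units.val_one, Int.cast_one,
    one_mul] at h
  exact_mod_cast h.symm

end TwistedSum

section YoungDiagram

variable {α : Type*} [Fintype α]

theorem rowLen_eq_card_filter (μ : YoungDiagram) (i : ℕ) : μ.rowLen i = #{c ∈ μ.cells | c.1 = i} :=
  μ.rowLen_eq_card

theorem colLen_eq_card_filter (μ : YoungDiagram) (j : ℕ) : μ.colLen j = #{c ∈ μ.cells | c.2 = j} :=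
  μ.colLen_eq_card

theorem colLen_zero_le_card (μ : YoungDiagram) : μ.colLen 0 ≤ μ.card :=
  (colLen_eq_card_filter μ 0).trans_le (card_filter_le _ _)

theorem rowLen_eq_zero_of_card_le {μ : YoungDiagram} {i : ℕ} (hi : μ.card ≤ i) :
    μ.rowLen i = 0 := by
  by_contra h
  have := YoungDiagram.mem_iff_lt_colLen.1 (YoungDiagram.mem_iff_lt_rowLen.2 (Nat.pos_of_ne_zero h))
  have := colLen_zero_le_card μ
  omega

theorem sum_rowLen {μ : YoungDiagram} {N : ℕ} (hN : μ.card ≤ N) :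
    ∑ i : Fin N, μ.rowLen i = μ.card := by
  have row_lt : ∀ c ∈ μ.cells, c.1 ∈ range N := fun c hc => mem_range.2 <| by
    by_contra h
    have := YoungDiagram.mem_iff_lt_rowLen.1 ((μ.mem_cells c).1 hc)
    rw [rowLen_eq_zero_of_card_le (by omega : μ.card ≤ c.1)] at this
    omega
  rw [Fin.sum_univ_eq_sum_range (fun i => μ.rowLen i), YoungDiagram.card,
    card_eq_sum_card_fiberwise row_lt]
  exact sum_congr rfl fun i _ => rowLen_eq_card_filter μ i

theorem exists_fiberCard_eq_colLen {μ : YoungDiagram} (hμ : μ.card = Fintype.card α) :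
    ∃ g : α → ℕ, ∀ j, fiberCard g j = μ.colLen j := by
  obtain ⟨e⟩ : Nonempty (α ≃ μ.cells) := by
    rw [← Fintype.card_eq, Fintype.card_coe, ← hμ]
  refine ⟨fun a => (e a).1.2, fun j => ?_⟩
  rw [colLen_eq_card_filter]
  refine card_bij (fun a _ => (e a).1) (fun a ha => ?_)
    (fun a _ b _ h => e.injective (Subtype.ext h)) fun c hc => ?_
  · simpa using ha
  · obtain ⟨mem_cells, rfl⟩ := mem_filter.1 hc
    exact ⟨e.symm ⟨c, mem_cells⟩, by simp, by simp⟩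

theorem card_filter_fst_lt_snd_eq (μ : YoungDiagram) (r j : ℕ) :
    #{c ∈ μ.cells | c.1 < r ∧ c.2 = j} = min r (μ.colLen j) := by
  rw [← card_range (min r (μ.colLen j))]
  refine card_bij (fun c _ => c.1) ?_ ?_ fun i hi => ⟨(i, j), ?_, rfl⟩
  · rintro ⟨i, j'⟩ hc
    obtain ⟨mem_cells, hr, rfl⟩ := mem_filter.1 hc
    exact mem_range.2 (lt_min hr (YoungDiagram.mem_iff_lt_colLen.1 mem_cells))
  · rintro c hc c' hc' h
    exact Prod.ext h ((mem_filter.1 hc).2.2.trans (mem_filter.1 hc').2.2.symm)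
  · obtain ⟨hr, hj⟩ := lt_min_iff.1 (mem_range.1 hi)
    exact mem_filter.2 ⟨YoungDiagram.mem_iff_lt_colLen.2 hj, hr, rfl⟩

/-- Each of the columns `g = j` meets `f < r` in at most `min r (μ.colLen j)` points. -/
theorem card_filter_lt_le_sum_rowLen {μ : YoungDiagram} {f g : α → ℕ}
    (hg : ∀ j, fiberCard g j = μ.colLen j) (hfg : ∀ a b, f a = f b → g a = g b → a = b) (r : ℕ) :
    #{a | f a < r} ≤ ∑ i ∈ range r, μ.rowLen i := by
  have column_le (j : ℕ) : #{a | f a < r ∧ g a = j} ≤ min r (μ.colLen j) := by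
    refine le_min ?_ ?_
    · refine (card_le_card_of_injOn f (t := range r) (fun a ha => ?_)
        fun a ha b hb hab => hfg a b hab ?_).trans_eq (card_range r)
      · exact mem_coe.2 (mem_range.2 (mem_filter.1 ha).2.1)
      · exact (mem_filter.1 ha).2.2.trans (mem_filter.1 hb).2.2.symm
    · rw [← hg, fiberCard]
      refine card_le_card fun a ha => ?_
      simp only [mem_filter, mem_univ, true_and] at ha ⊢
      exact ha.2
  have column_lt : ∀ a ∈ ({a | f a < r} : Finset α), g a ∈ range (μ.rowLen 0) := fun a _ => by
    rw [mem_range, ← YoungDiagram.mem_iff_lt_rowLen, YoungDiagram.mem_iff_lt_colLen, ← hg]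
    exact card_pos.2 ⟨a, by simp⟩
  have cell_column_lt : ∀ c ∈ ({c ∈ μ.cells | c.1 < r} : Finset _), c.2 ∈ range (μ.rowLen 0) :=
    fun c hc => mem_range.2 <| (YoungDiagram.mem_iff_lt_rowLen.1 (mem_filter.1 hc).1).trans_le
      (μ.rowLen_anti 0 c.1 (Nat.zero_le _))
  calc #{a | f a < r}
      = ∑ j ∈ range (μ.rowLen 0), #{a | f a < r ∧ g a = j} := by
        rw [card_eq_sum_card_fiberwise column_lt]; simp only [filter_filter]
    _ ≤ ∑ j ∈ range (μ.rowLen 0), #{c ∈ μ.cells | c.1 < r ∧ c.2 = j} :=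
        sum_le_sum fun j _ => (column_le j).trans (card_filter_fst_lt_snd_eq μ r j).ge
    _ = #{c ∈ μ.cells | c.1 < r} := by
        rw [card_eq_sum_card_fiberwise cell_column_lt]; simp only [filter_filter]
    _ = ∑ i ∈ range r, μ.rowLen i := by
        rw [card_eq_sum_card_fiberwise (f := Prod.fst) (t := range r)
          fun c hc => mem_coe.2 (mem_range.2 (mem_filter.1 hc).2)]
        refine sum_congr rfl fun i hi => ?_
        rw [rowLen_eq_card_filter, filter_filter]
        congr 1
        ext c
        have := mem_range.1 hi
        simp only [mem_filter, and_congr_right_iff, and_iff_right_iff_imp]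
        omega

theorem perm_eq_one_of_forall_sum_le {N : ℕ} {π : Equiv.Perm (Fin N)}
    (h : ∀ r ≤ N, ∑ i : Fin N with i.val < r, (π i : ℕ) ≤ ∑ i : Fin N with i.val < r, (i : ℕ)) :
    π = 1 := by
  suffices fixes : ∀ k (hk : k < N), π ⟨k, hk⟩ = ⟨k, hk⟩ from Equiv.ext fun i => fixes i i.2
  intro k
  induction k using Nat.strong_induction_on with
  | _ k ih =>
    intro hk
    have filter_succ : ({i : Fin N | (i : ℕ) < k + 1} : Finset (Fin N)) =
        insert ⟨k, hk⟩ ({i : Fin N | (i : ℕ) < k} : Finset (Fin N)) := by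
      ext i
      simp only [mem_filter, mem_univ, true_and, mem_insert, Fin.ext_iff]
      omega
    have sum_lt : ∑ i : Fin N with i.val < k, (π i : ℕ) = ∑ i : Fin N with i.val < k, (i : ℕ) :=
      sum_congr rfl fun i hi => by rw [ih i (mem_filter.1 hi).2 i.2]
    have apply_le := h (k + 1) hk
    rw [filter_succ, sum_insert (by simp), sum_insert (by simp), sum_lt, add_le_add_iff_right]
      at apply_le
    refine Fin.ext (apply_le.antisymm (not_lt.1 fun apply_lt => ?_))
    have := congrArg Fin.val (π.injective (ih _ apply_lt (π ⟨k, hk⟩).2))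
    exact apply_lt.ne this

theorem perm_eq_one_of_fiberCard_eq {μ : YoungDiagram} {N : ℕ} {F : α → Fin N} {g : α → ℕ}
    {π : Equiv.Perm (Fin N)} (hF : ∀ i, (fiberCard F i : ℤ) = μ.rowLen i + (π i : ℕ) - (i : ℕ))
    (hg : ∀ j, fiberCard g j = μ.colLen j) (hFg : ∀ a b, F a = F b → g a = g b → a = b) :
    π = 1 := by
  refine perm_eq_one_of_forall_sum_le fun r hr => ?_
  have card_le := card_filter_lt_le_sum_rowLen (f := fun a => (F a : ℕ)) hg
    (fun a b hab => hFg a b (Fin.ext hab)) r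
  have card_eq : #{a | (F a : ℕ) < r} = ∑ i : Fin N with i.val < r, fiberCard F i := by
    rw [card_eq_sum_card_fiberwise (f := F) (t := {i : Fin N | (i : ℕ) < r}) (fun a => by simp)]
    refine sum_congr rfl fun i hi => ?_
    rw [filter_filter, fiberCard]
    congr 1
    ext a
    have := (mem_filter.1 hi).2
    simp only [mem_filter, mem_univ, true_and, and_iff_right_iff_imp]
    rintro rfl
    exact this
  have sum_row_eq : ∑ i ∈ range r, μ.rowLen i = ∑ i : Fin N with i.val < r, μ.rowLen i := by
    rw [sum_filter, Fin.sum_univ_eq_sum_range (fun i => if i < r then μ.rowLen i else 0) N,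
      ← sum_filter]
    congr 1
    ext i
    simp only [mem_range, mem_filter]
    omega
  rw [card_eq, sum_row_eq] at card_le
  zify at card_le ⊢
  simp only [hF, sum_add_distrib, sum_sub_distrib] at card_le
  linarith

end YoungDiagram

section YoungSubgroup

variable {n : ℕ}

theorem mem_youngSubgroup {f : Fin n → ℕ} {w : Equiv.Perm (Fin n)} :
    w ∈ youngSubgroup n f ↔ f ∘ w = f :=
  funext_iff.symm

theorem swap_mem_youngSubgroup {f : Fin n → ℕ} {a b : Fin n} (hab : f a = f b) :
    Equiv.swap a b ∈ youngSubgroup n f :=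
  fun c => Equiv.apply_swap_eq_self hab c

theorem fiberSizes_eq_rowLens {ν : YoungDiagram} {f : Fin n → ℕ}
    (hf : ∀ j, fiberCard f j = ν.rowLen j) : fiberSizes n f = ↑ν.rowLens := by
  have image_eq : univ.image f = range (ν.colLen 0) := by
    ext j
    rw [mem_range, ← YoungDiagram.mem_iff_lt_colLen, YoungDiagram.mem_iff_lt_rowLen, ← hf,
      fiberCard, card_pos]
    simp [Finset.Nonempty]
  rw [fiberSizes, image_eq, YoungDiagram.rowLens, ← Multiset.map_coe, range_val, Multiset.range]
  refine Multiset.map_congr rfl fun j _ => ?_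
  rw [← hf, fiberCard]
  congr

theorem sum_mul_youngCharacter {ι : Type*} [Fintype ι] (ψ : Equiv.Perm (Fin n) → ℤ) {φ : ι → ℕ}
    (hφ : Function.Injective φ) (a : ι → ℤ) :
    ∑ w, ψ w * youngCharacter a w =
      ∑ F : Fin n → ι with ∀ i, (fiberCard F i : ℤ) = a i, ∑ w : youngSubgroup n (φ ∘ F), ψ w := by
  have mem_iff (F : Fin n → ι) (w : Equiv.Perm (Fin n)) :
      w ∈ youngSubgroup n (φ ∘ F) ↔ F ∘ w = F := by
    rw [mem_youngSubgroup, Function.comp_assoc, hφ.comp_left.eq_iff]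
  have sum_subgroup (F : Fin n → ι) :
      ∑ w : youngSubgroup n (φ ∘ F), ψ w =
        ∑ w : Equiv.Perm (Fin n), if F ∘ w = F then ψ w else 0 := by
    rw [← sum_filter]
    exact (sum_subtype _ (fun w => by simp [mem_iff]) ψ).symm
  simp only [sum_subgroup]
  rw [sum_comm]
  refine sum_congr rfl fun w _ => ?_
  rw [← sum_filter, filter_filter, sum_const, nsmul_eq_mul, mul_comm]
  rfl

theorem pairS_indCF {ψ : Equiv.Perm (Fin n) → ℚ} (hψ : ∀ g w, ψ (g * w * g⁻¹) = ψ w)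
    (H : Subgroup (Equiv.Perm (Fin n))) (φ : Equiv.Perm (Fin n) → ℚ) :
    pairS n ψ (indCF H φ) = (Nat.card H : ℚ)⁻¹ * ∑ h : H, φ h * ψ h := by
  have conj_sum (g : Equiv.Perm (Fin n)) :
      ∑ w, ψ w * (if g⁻¹ * w * g ∈ H then φ (g⁻¹ * w * g) else 0) = ∑ h : H, φ h * ψ h := by
    calc ∑ w, ψ w * (if g⁻¹ * w * g ∈ H then φ (g⁻¹ * w * g) else 0)
        = ∑ w, if w ∈ H then φ w * ψ w else 0 := by
          refine (Fintype.sum_equiv (MulAut.conj g).toEquiv _ _ fun w => ?_).symm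
          have conj_conj : g⁻¹ * (g * w * g⁻¹) * g = w := by group
          have apply_eq : (MulAut.conj g).toEquiv w = g * w * g⁻¹ := rfl
          rw [apply_eq, hψ, conj_conj, mul_ite, mul_zero, mul_comm]
      _ = ∑ h : H, φ h * ψ h := by
          rw [← sum_filter]
          exact sum_subtype _ (fun w => by simp) fun w => φ w * ψ w
  have factorial_ne : (n.factorial : ℚ) ≠ 0 := Nat.cast_ne_zero.2 n.factorial_ne_zero
  simp only [pairS, indCF, mul_left_comm _ (Nat.card H : ℚ)⁻¹, ← mul_sum]
  congr 1
  simp only [mul_sum]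
  rw [sum_comm]
  simp only [← mul_sum, conj_sum]
  rw [sum_const, card_univ, Fintype.card_perm, Fintype.card_fin, nsmul_eq_mul,
    inv_mul_cancel_left₀ factorial_ne]

end YoungSubgroup

namespace IsIrrCharOf

section Partition

variable {n : ℕ} {lam lamT : Multiset ℕ} {χ : Equiv.Perm (Fin n) → ℤ}

theorem sum_mul_self (hχ : IsIrrCharOf n lam lamT χ) : ∑ w, χ w * χ w = n.factorial := by
  have norm_eq := hχ.2.1
  rw [pairS, inv_mul_eq_iff_eq_mul₀ (Nat.cast_ne_zero.2 n.factorial_ne_zero), mul_one] at norm_eq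
  exact_mod_cast norm_eq

theorem apply_conj (hχ : IsIrrCharOf n lam lamT χ) (g w : Equiv.Perm (Fin n)) :
    χ (g * w * g⁻¹) = χ w := by
  obtain ⟨V, hV⟩ := hχ.1
  have h := V.char_conj w g
  rw [hV, hV] at h
  exact_mod_cast h

theorem apply_inv (hχ : IsIrrCharOf n lam lamT χ) (w : Equiv.Perm (Fin n)) : χ w⁻¹ = χ w := by
  have isConj_inv : IsConj w w⁻¹ := by
    rw [Equiv.Perm.isConj_iff_cycleType_eq, Equiv.Perm.cycleType_inv]
  obtain ⟨c, hc⟩ := isConj_iff.1 isConj_inv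
  rw [← hc, hχ.apply_conj]

theorem pairS_indCF_ne_zero_iff (hχ : IsIrrCharOf n lam lamT χ) (H : Subgroup (Equiv.Perm (Fin n)))
    (φ : Equiv.Perm (Fin n) → ℤ) :
    pairS n (fun w => (χ w : ℚ)) (indCF H fun w => (φ w : ℚ)) ≠ 0 ↔ ∑ h : H, φ h * χ h ≠ 0 := by
  rw [pairS_indCF fun g w => by rw [hχ.apply_conj],
    mul_ne_zero_iff_left (inv_ne_zero (Nat.cast_ne_zero.2 Nat.card_pos.ne'))]
  exact_mod_cast Iff.rfl

theorem card_youngSubgroup_le (hχ : IsIrrCharOf n lam lamT χ) {f : Fin n → ℕ}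
    (hf : fiberSizes n f = lam) :
    (Nat.card (youngSubgroup n f) : ℤ) ≤ ∑ w : youngSubgroup n f, χ w := by
  obtain ⟨V, hV⟩ := hχ.1
  refine card_le_sum_of_sum_ne_zero (ρ := V.ρ) hV ?_
  have h := (hχ.pairS_indCF_ne_zero_iff (youngSubgroup n f) fun _ => 1).1
    (by simpa using hχ.2.2.1 f hf)
  simpa using h

theorem sum_youngSubgroup_eq_zero (hχ : IsIrrCharOf n lam lamT χ) {f g : Fin n → ℕ}
    (hg : fiberSizes n g = lamT)
    (hfg : ∀ u : Equiv.Perm (Fin n), ∃ a b, a ≠ b ∧ f a = f b ∧ g (u a) = g (u b)) :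
    ∑ w : youngSubgroup n f, χ w = 0 := by
  obtain ⟨V, hV⟩ := hχ.1
  have norm_eq : ∑ w, χ w * χ w = Fintype.card (Equiv.Perm (Fin n)) := by
    rw [hχ.sum_mul_self, Fintype.card_perm, Fintype.card_fin]
  refine sum_eq_zero_of_twisted_sum_ne_zero (ρ := V.ρ) (θ := Equiv.Perm.sign)
    (H' := youngSubgroup n g) hV norm_eq hχ.apply_inv (fun u => ?_)
    ((hχ.pairS_indCF_ne_zero_iff _ _).1 (hχ.2.2.2 g hg))
  obtain ⟨a, b, hab, hf, hgu⟩ := hfg u⁻¹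
  refine ⟨Equiv.swap a b, swap_mem_youngSubgroup hf, ?_, ?_⟩
  · have conj_swap : u⁻¹ * Equiv.swap a b * u = Equiv.swap (u⁻¹ a) (u⁻¹ b) := by
      rw [Equiv.swap_apply_apply, inv_inv]
    rw [conj_swap]
    exact swap_mem_youngSubgroup hgu
  · rw [Equiv.Perm.sign_swap hab]
    decide

end Partition

end IsIrrCharOf

section ShiftedRowLen

variable {μ : YoungDiagram} {N : ℕ}

/-- The exponents `λ + δ` of the alternants for a Young diagram with at most `N` rows, listed in
increasing order. -/
def shiftedRowLen (μ : YoungDiagram) (N : ℕ) (i : Fin N) : ℕ := μ.rowLen i.rev + i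

theorem shiftedRowLen_strictMono (μ : YoungDiagram) (N : ℕ) : StrictMono (shiftedRowLen μ N) :=
  fun _ _ hij => add_lt_add_of_le_of_lt (μ.rowLen_anti _ _ (Fin.rev_le_rev.2 hij.le)) hij

theorem sum_shiftedRowLen (hN : μ.card ≤ N) :
    ∑ i, shiftedRowLen μ N i = μ.card + ∑ i : Fin N, (i : ℕ) := by
  simp only [shiftedRowLen, sum_add_distrib]
  rw [← sum_rowLen hN, ← Equiv.sum_comp Fin.revPerm fun i : Fin N => μ.rowLen i]
  rfl

variable {α : Type*} [Fintype α]

theorem fiberCard_rev_comp (F : α → Fin N) (i : Fin N) :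
    fiberCard (fun a => (F a).rev) i = fiberCard F i.rev := by
  unfold fiberCard
  congr 1
  ext a
  simp [Fin.rev_eq_iff]

theorem fiberCard_val_rev_eq_rowLen (hN : μ.card ≤ N) {F : α → Fin N}
    (hF : ∀ i, fiberCard F i = μ.rowLen i.rev) (j : ℕ) :
    fiberCard (fun a => ((F a).rev : ℕ)) j = μ.rowLen j := by
  by_cases hj : j < N
  · have h := fiberCard_rev_comp F ⟨j, hj⟩
    rw [hF, Fin.rev_rev] at h
    rw [← h]
    unfold fiberCard
    congr 1
    ext a
    simp [Fin.ext_iff]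
  · rw [rowLen_eq_zero_of_card_le (by omega), fiberCard, card_eq_zero]
    refine eq_empty_of_forall_notMem fun a ha => hj ?_
    simp only [mem_filter, mem_univ, true_and] at ha
    exact ha ▸ (F a).rev.isLt

end ShiftedRowLen

namespace IsIrrCharOf

section YoungDiagram

variable {n : ℕ} {μ : YoungDiagram} {χ : Equiv.Perm (Fin n) → ℤ}

theorem sum_mul_youngCharacter_eq_zero (hχ : IsIrrCharOf n μ.rowLens μ.transpose.rowLens χ)
    (hμ : μ.card = n) {N : ℕ} {π : Equiv.Perm (Fin N)} (hπ : π ≠ 1) :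
    ∑ w, χ w * youngCharacter (fun i => (shiftedRowLen μ N i : ℤ) - (π i : ℕ)) w = 0 := by
  obtain ⟨g, hg⟩ := exists_fiberCard_eq_colLen (hμ.trans (Fintype.card_fin n).symm)
  have hg_sizes : fiberSizes n g = μ.transpose.rowLens :=
    fiberSizes_eq_rowLens fun j => (hg j).trans (μ.rowLen_transpose j).symm
  rw [sum_mul_youngCharacter χ (Fin.val_injective.comp Fin.rev_injective)]
  refine sum_eq_zero fun F hF => hχ.sum_youngSubgroup_eq_zero hg_sizes fun u => ?_
  by_contra! separated
  simp only [mem_filter, mem_univ, true_and] at hF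
  let ρ : Equiv.Perm (Fin N) := Fin.revPerm * π * Fin.revPerm
  have fiberCard_rev (i : Fin N) :
      (fiberCard (fun a => (F a).rev) i : ℤ) = μ.rowLen i + (ρ i : ℕ) - (i : ℕ) := by
    have apply_eq : (ρ i : ℕ) = (π i.rev).rev := rfl
    rw [fiberCard_rev_comp, hF i.rev, shiftedRowLen, Fin.rev_rev, apply_eq, Fin.val_rev,
      Fin.val_rev]
    omega
  have conj_eq_one := perm_eq_one_of_fiberCard_eq (g := g ∘ u) fiberCard_rev
    (fun j => (congrFun (fiberCard_comp_perm g u) j).trans (hg j)) fun a b hab hgab => by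
      by_contra hne
      exact separated a b hne (congrArg Fin.val hab) hgab
  refine hπ (Equiv.ext fun i => ?_)
  simpa [ρ] using congrArg (fun τ : Equiv.Perm (Fin N) => (τ i.rev).rev) conj_eq_one

theorem factorial_le_sum_mul_youngCharacter
    (hχ : IsIrrCharOf n μ.rowLens μ.transpose.rowLens χ) (hμ : μ.card = n) {N : ℕ} (hN : n ≤ N) :
    (n.factorial : ℤ) ≤
      ∑ w, χ w * youngCharacter (fun i : Fin N => (μ.rowLen i.rev : ℤ)) w := by
  have sum_rowLen_rev : ∑ i : Fin N, μ.rowLen i.rev = Fintype.card (Fin n) := by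
    rw [Fintype.card_fin, ← hμ, ← sum_rowLen (hμ.trans_le hN),
      ← Equiv.sum_comp Fin.revPerm fun i : Fin N => μ.rowLen i]
    rfl
  have sum_one := sum_youngCharacter sum_rowLen_rev
  have rev_injective : Function.Injective (Fin.val ∘ Fin.rev : Fin N → ℕ) :=
    Fin.val_injective.comp Fin.rev_injective
  have sum_one_mul := sum_mul_youngCharacter (n := n) (fun _ => 1) rev_injective
    fun i => (μ.rowLen i.rev : ℤ)
  simp only [one_mul] at sum_one_mul
  rw [sum_one_mul, Fintype.card_fin] at sum_one
  rw [← sum_one, sum_mul_youngCharacter χ rev_injective]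
  refine sum_le_sum fun F hF => ?_
  simp only [mem_filter, mem_univ, true_and] at hF
  have rowLens_eq := fiberSizes_eq_rowLens (fiberCard_val_rev_eq_rowLen (hμ.trans_le hN)
    fun i => Nat.cast_injective (hF i))
  have card_le := hχ.card_youngSubgroup_le rowLens_eq
  rw [Nat.card_eq_fintype_card] at card_le
  rw [sum_const, card_univ, nsmul_one]
  exact card_le

theorem factorial_le_sum_mul_frobeniusCharacter
    (hχ : IsIrrCharOf n μ.rowLens μ.transpose.rowLens χ) (hμ : μ.card = n) {N : ℕ} (hN : n ≤ N) :
    (n.factorial : ℤ) ≤ ∑ w, χ w * frobeniusCharacter (shiftedRowLen μ N) w := by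
  refine (hχ.factorial_le_sum_mul_youngCharacter hμ hN).trans_eq ?_
  simp only [frobeniusCharacter, mul_sum, mul_left_comm (χ _)]
  rw [sum_comm]
  simp only [← mul_sum]
  rw [Fintype.sum_eq_single (1 : Equiv.Perm (Fin N)) fun π hπ => by
    rw [hχ.sum_mul_youngCharacter_eq_zero hμ hπ, mul_zero]]
  simp [shiftedRowLen]

/-- Both sides have norm one and their scalar product is at least one. -/
theorem eq_frobeniusCharacter (hχ : IsIrrCharOf n μ.rowLens μ.transpose.rowLens χ)
    (hμ : μ.card = n) {N : ℕ} (hN : n ≤ N) : χ = frobeniusCharacter (shiftedRowLen μ N) := by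
  have norm_eq := sum_frobeniusCharacter_mul_self (α := Fin n)
    (shiftedRowLen_strictMono μ N).injective
    ((sum_shiftedRowLen (hμ.trans_le hN)).trans (by rw [hμ, Fintype.card_fin]))
  rw [Fintype.card_fin] at norm_eq
  have sum_sq_nonpos : ∑ w, (χ w - frobeniusCharacter (shiftedRowLen μ N) w) ^ 2 ≤ 0 := by
    simp only [sub_sq, sum_add_distrib, sum_sub_distrib, mul_assoc, ← mul_sum]
    simp only [sq]
    linarith [hχ.sum_mul_self, hχ.factorial_le_sum_mul_frobeniusCharacter hμ hN]
  have sum_sq_eq_zero := sum_sq_nonpos.antisymm (sum_nonneg fun w _ => sq_nonneg _)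
  funext w
  rw [sum_eq_zero_iff_of_nonneg fun w _ => sq_nonneg _] at sum_sq_eq_zero
  exact sub_eq_zero.1 (pow_eq_zero_iff two_ne_zero |>.1 (sum_sq_eq_zero w (mem_univ w)))

end YoungDiagram

end IsIrrCharOf

section CycleDeterminant

open Equiv.Perm

theorem eq_one_or_eq_of_forall_apply_eq_or {α : Type*} [Finite α] {σ τ : Equiv.Perm α}
    (hσ : ∀ a b, σ.SameCycle a b) (hτ : ∀ a, τ a = a ∨ τ a = σ a) : τ = 1 ∨ τ = σ := by
  by_cases hne : ∃ a, τ a ≠ a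
  · obtain ⟨a, ha⟩ := hne
    have moved_apply {b : α} (hb : τ b = σ b ∧ τ b ≠ b) :
        τ (σ b) = σ (σ b) ∧ τ (σ b) ≠ σ b := by
      have h_ne : τ (σ b) ≠ σ b := fun h => hb.2 (τ.injective (by rw [hb.1, h]))
      exact ⟨(hτ (σ b)).resolve_left h_ne, h_ne⟩
    have moved_pow (k : ℕ) : τ ((σ ^ k) a) = σ ((σ ^ k) a) ∧ τ ((σ ^ k) a) ≠ (σ ^ k) a := by
      induction k with
      | zero => exact ⟨(hτ a).resolve_left ha, ha⟩
      | succ k ih => rw [pow_succ', mul_apply]; exact moved_apply ih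
    refine Or.inr (Equiv.ext fun b => ?_)
    obtain ⟨k, -, rfl⟩ := (hσ a b).exists_pow_eq'
    exact (moved_pow k).1
  · push Not at hne
    exact Or.inl (Equiv.ext hne)

variable {α R : Type*} [DecidableEq α] [CommRing R]

/-- The monomial matrix sending the basis vector `e_j` to `u_j e_{w j}`. -/
def monomialMatrix (w : Equiv.Perm α) (u : α → R) : Matrix α α R :=
  Matrix.of fun i j => if w j = i then u j else 0

theorem smul_monomialMatrix (w : Equiv.Perm α) (u : α → R) (c : R) :
    c • monomialMatrix w u = monomialMatrix w fun a => c * u a := by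
  ext i j
  simp [monomialMatrix]

variable [Fintype α]

theorem det_one_sub_monomialMatrix_of_isCycle {σ : Equiv.Perm α} (hσ : σ.IsCycle)
    (hsupp : σ.support = univ) (u : α → R) :
    (1 - monomialMatrix σ u).det = 1 - ∏ a, u a := by
  have h_ne (a : α) : σ a ≠ a := mem_support.1 (hsupp ▸ mem_univ a)
  rw [Matrix.det_apply', sum_eq_add_of_mem 1 σ (mem_univ _) (mem_univ _) hσ.ne_one.symm]
  · have h_one : ∏ a, (1 - monomialMatrix σ u) ((1 : Equiv.Perm α) a) a = 1 :=
      prod_eq_one fun a _ => by simp [monomialMatrix, h_ne]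
    have h_cycle : ∏ a, (1 - monomialMatrix σ u) (σ a) a = (-1) ^ Fintype.card α * ∏ a, u a := by
      simp [monomialMatrix, h_ne, prod_neg]
    have h_sign : ((sign σ : ℤ) : R) * (-1) ^ Fintype.card α = -1 := by
      rw [hσ.sign, hsupp, card_univ]
      push_cast
      rw [neg_mul, ← mul_pow, neg_one_mul, neg_neg, one_pow]
    rw [h_one, h_cycle, ← mul_assoc, h_sign]
    simp [sub_eq_add_neg]
  · rintro τ - ⟨h_ne_one, h_ne_σ⟩
    obtain ⟨a, ha⟩ : ∃ a, ¬(τ a = a ∨ τ a = σ a) := by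
      by_contra! h
      have sameCycle (a b : α) : σ.SameCycle a b := hσ.sameCycle (h_ne a) (h_ne b)
      exact (eq_one_or_eq_of_forall_apply_eq_or sameCycle h).elim h_ne_one h_ne_σ
    rw [not_or] at ha
    rw [prod_eq_zero (mem_univ a), mul_zero]
    simp [monomialMatrix, ha.1, Ne.symm ha.2]

theorem det_one_sub_monomialMatrix_of_sameCycle [Nonempty α] {σ : Equiv.Perm α}
    (hσ : ∀ a b, σ.SameCycle a b) (u : α → R) :
    (1 - monomialMatrix σ u).det = 1 - ∏ a, u a := by
  by_cases hfix : ∃ a, σ a = a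
  · obtain ⟨a, ha⟩ := hfix
    have : Unique α := ⟨⟨a⟩, fun b => ((hσ a b).eq_of_left ha).symm⟩
    simp [Matrix.det_unique, monomialMatrix, Subsingleton.elim (σ default) default]
  · push Not at hfix
    obtain ⟨a⟩ := ‹Nonempty α›
    refine det_one_sub_monomialMatrix_of_isCycle ⟨a, hfix a, fun b _ => hσ a b⟩ ?_ u
    exact eq_univ_iff_forall.2 fun b => mem_support.2 (hfix b)

theorem det_one_sub_monomialMatrix (w : Equiv.Perm α) (u : α → R) :
    (1 - monomialMatrix w u).det =
      ∏ o : Cycles w, (1 - ∏ a with (⟦a⟧ : Cycles w) = o, u a) := by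
  let _ : LinearOrder (Cycles w) := LinearOrder.lift' _ (Fintype.equivFin (Cycles w)).injective
  have blockTriangular : (1 - monomialMatrix w u).BlockTriangular fun a => (⟦a⟧ : Cycles w) := by
    intro i j hij
    have h_ne : i ≠ j := by rintro rfl; exact hij.ne rfl
    have h_ne_apply : w j ≠ i := by rintro rfl; exact hij.ne (Cycles.mk_apply w j).symm
    simp [monomialMatrix, h_ne, h_ne_apply]
  rw [blockTriangular.det_fintype]
  refine prod_congr rfl fun o _ => ?_
  have : Nonempty {a // (⟦a⟧ : Cycles w) = o} := o.inductionOn fun a => ⟨a, rfl⟩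
  have apply_mem (a : α) : (⟦w a⟧ : Cycles w) = o ↔ (⟦a⟧ : Cycles w) = o := by
    rw [Cycles.mk_apply]
  have sameCycle (a b : {a // (⟦a⟧ : Cycles w) = o}) :
      (w.subtypePerm apply_mem).SameCycle a b :=
    sameCycle_subtypePerm.2 (Quotient.exact (a.2.trans b.2.symm))
  rw [prod_subtype (p := fun a => (⟦a⟧ : Cycles w) = o) _ (by simp) u,
    ← det_one_sub_monomialMatrix_of_sameCycle sameCycle fun a => u a]
  congr 1
  ext i j
  simp [Matrix.toSquareBlock_def, Matrix.one_apply, monomialMatrix, Subtype.ext_iff]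

theorem sum_det_one_sub_monomialMatrix {κ : Type*} [Fintype κ] (w : Equiv.Perm α) {f : κ → R}
    (hf : ∑ k, f k = 0) :
    ∑ ε : α → κ, (1 - monomialMatrix w fun a => f (ε a)).det =
      (Fintype.card κ : R) ^ Fintype.card α := by
  let column (j : α) (k : κ) (i : α) : R := (if i = j then 1 else 0) - if w j = i then f k else 0
  have det_eq (ε : α → κ) : (1 - monomialMatrix w fun a => f (ε a)).det =
      Matrix.detRowAlternating.toMultilinearMap fun j => column j (ε j) := by
    rw [← Matrix.det_transpose]
    refine congrArg Matrix.det (Matrix.ext fun i j => ?_)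
    simp [column, monomialMatrix, Matrix.one_apply]
  have sum_column : (fun j => ∑ k, column j k) = (Fintype.card κ : R) • (1 : Matrix α α R) := by
    ext j i
    by_cases h : w j = i <;> simp [column, h, hf, Matrix.one_apply, eq_comm]
  simp only [det_eq]
  rw [← MultilinearMap.map_sum, sum_column]
  exact (Matrix.det_smul _ _).trans (by rw [Matrix.det_one, mul_one])

end CycleDeterminant

section EllipticSum

variable {F : Type*} [Field F]

theorem inv_one_add_pow {q : F} {k : ℕ} (hq : q ^ k ≠ 1) :
    (1 + q ^ k)⁻¹ = (q ^ k - 1) / ((q ^ 2) ^ k - 1) := by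
  have factor : (q ^ 2) ^ k - 1 = (q ^ k - 1) * (1 + q ^ k) := by rw [pow_right_comm]; ring
  rw [factor, div_mul_cancel_left₀ (sub_ne_zero.2 hq)]

/-- The value `±1` of a sign stored as a Boolean, `true` standing for `-1`. -/
def boolSign (b : Bool) : F := if b then -1 else 1

theorem boolSign_eq_one_or (b : Bool) : (boolSign b : F) = 1 ∨ (boolSign b : F) = -1 := by
  cases b <;> simp [boolSign]

variable {α : Type*} [Fintype α] [DecidableEq α]

theorem det_one_sub_div_det_one_sub_smul (w : Equiv.Perm α) {s : α → F}
    (hs : ∀ a, s a = 1 ∨ s a = -1) (q : F) :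
    (1 - monomialMatrix w s).det / (1 - q • monomialMatrix w s).det =
      (1 - monomialMatrix w s).det * ∏ o : Cycles w, (1 + q ^ o.length)⁻¹ := by
  rw [smul_monomialMatrix, det_one_sub_monomialMatrix, det_one_sub_monomialMatrix,
    ← prod_div_distrib, ← prod_mul_distrib]
  refine prod_congr rfl fun o _ => ?_
  have prod_eq_one_or : ∏ a with (⟦a⟧ : Cycles w) = o, s a = 1 ∨
      ∏ a with (⟦a⟧ : Cycles w) = o, s a = -1 := by
    refine mul_self_eq_one_iff.1 ?_
    rw [← prod_mul_distrib]
    exact prod_eq_one fun a _ => mul_self_eq_one_iff.2 (hs a)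
  rw [prod_mul_distrib, prod_const, Cycles.card_filter_mk_eq]
  rcases prod_eq_one_or with h | h
  · simp [h]
  · rw [h, mul_neg_one, sub_neg_eq_add (1 : F) (q ^ _), div_eq_mul_inv]

theorem sum_boolSign_det_div_det (w : Equiv.Perm α) {q : F} (hq : ∀ k, 0 < k → q ^ k ≠ 1) :
    ∑ ε : α → Bool, (1 - monomialMatrix w fun a => (boolSign (ε a) : F)).det /
        (1 - q • monomialMatrix w fun a => (boolSign (ε a) : F)).det =
      2 ^ Fintype.card α * ∏ o : Cycles w, (q ^ o.length - 1) / ((q ^ 2) ^ o.length - 1) := by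
  have sum_boolSign : ∑ b, (boolSign b : F) = 0 := by simp [boolSign]
  simp only [det_one_sub_div_det_one_sub_smul w fun _ => boolSign_eq_one_or _]
  rw [← sum_mul, sum_det_one_sub_monomialMatrix w sum_boolSign, Fintype.card_bool, Nat.cast_ofNat]
  exact congrArg _ (prod_congr rfl fun o _ => inv_one_add_pow (hq _ o.length_pos))

/-- The matrix of a signed permutation, a `true` sign standing for `-1` as in `BMat`. -/
def signedPermMatrix (F : Type*) [Field F] (p : Equiv.Perm α × (α → Bool)) : Matrix α α F :=
  monomialMatrix p.1 fun a => boolSign (p.2 a)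

theorem sum_mul_det_div_det (φ : Equiv.Perm α → F) {q : F} (hq : ∀ k, 0 < k → q ^ k ≠ 1) :
    ∑ p : Equiv.Perm α × (α → Bool),
        φ p.1 * (1 - signedPermMatrix F p).det / (1 - q • signedPermMatrix F p).det =
      2 ^ Fintype.card α *
        ∑ w, φ w * ∏ o : Cycles w, (q ^ o.length - 1) / ((q ^ 2) ^ o.length - 1) := by
  simp only [signedPermMatrix, Fintype.sum_prod_type, mul_div_assoc, ← mul_sum,
    sum_boolSign_det_div_det _ hq, mul_left_comm _ ((2 : F) ^ _)]

end EllipticSum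

section Hooks

variable {μ : YoungDiagram} {N : ℕ}

theorem colLen_le (hN : μ.card ≤ N) (j : ℕ) : μ.colLen j ≤ N :=
  ((μ.colLen_anti 0 j (Nat.zero_le j)).trans (colLen_zero_le_card μ)).trans hN

theorem lt_rowLen_iff_lt_colLen {i j : ℕ} : j < μ.rowLen i ↔ i < μ.colLen j := by
  rw [← YoungDiagram.mem_iff_lt_rowLen, YoungDiagram.mem_iff_lt_colLen]

theorem hookLen_pos {c : ℕ × ℕ} (hc : c ∈ μ.cells) : 0 < hookLen μ c := by
  have h_row := YoungDiagram.mem_iff_lt_rowLen.1 ((YoungDiagram.mem_cells c).1 hc)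
  have h_col := lt_rowLen_iff_lt_colLen.1 h_row
  unfold hookLen
  omega

theorem hookLen_injOn (i : ℕ) : Set.InjOn (fun c => hookLen μ (i, c)) (range (μ.rowLen i)) := by
  refine StrictAntiOn.injOn fun c hc d hd hcd => ?_
  have hc_col := lt_rowLen_iff_lt_colLen.1 (mem_range.1 hc)
  have h_anti := μ.colLen_anti c d hcd.le
  simp only [coe_range, Set.mem_Iio] at hc hd
  simp only [hookLen]
  omega

theorem hookLen_le_shiftedRowLen (hN : μ.card ≤ N) (j : Fin N) (c : ℕ) :
    hookLen μ (j.rev, c) ≤ shiftedRowLen μ N j := by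
  have h_col := colLen_le hN c
  simp only [hookLen, shiftedRowLen, Fin.val_rev]
  omega

theorem shiftedRowLen_sub_ne_hookLen {i j : Fin N} (hij : i < j) {c : ℕ}
    (hc : c < μ.rowLen j.rev) :
    shiftedRowLen μ N j - shiftedRowLen μ N i ≠ hookLen μ (j.rev, c) := by
  have h_lt := shiftedRowLen_strictMono μ N hij
  have h_col := lt_rowLen_iff_lt_colLen.1 hc
  have h_rev : (j.rev : ℕ) < i.rev := Fin.rev_lt_rev.2 hij
  have h_iff : c < μ.rowLen i.rev ↔ (i.rev : ℕ) < μ.colLen c := lt_rowLen_iff_lt_colLen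
  simp only [shiftedRowLen, hookLen, Fin.val_rev] at h_lt h_col h_rev h_iff hc ⊢
  omega

/-- The differences `β_j - β_i` of shifted row lengths and the hook lengths in the row of `β_j`
together fill `{1, …, β_j}`. -/
theorem prod_shiftedRowLen_sub_mul_prod_hookLen {M : Type*} [CommMonoid M] (hN : μ.card ≤ N)
    (j : Fin N) (F : ℕ → M) :
    (∏ i ∈ Iio j, F (shiftedRowLen μ N j - shiftedRowLen μ N i)) *
      ∏ c ∈ range (μ.rowLen j.rev), F (hookLen μ (j.rev, c)) =
        ∏ m ∈ Icc 1 (shiftedRowLen μ N j), F m := by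
  have sub_injOn : Set.InjOn (fun i => shiftedRowLen μ N j - shiftedRowLen μ N i) (Iio j) := by
    intro i hi i' hi' h
    have hi := shiftedRowLen_strictMono μ N (mem_Iio.1 hi)
    have hi' := shiftedRowLen_strictMono μ N (mem_Iio.1 hi')
    refine (shiftedRowLen_strictMono μ N).injective ?_
    simp only at h
    omega
  have h_disjoint : Disjoint
      ((Iio j).image fun i => shiftedRowLen μ N j - shiftedRowLen μ N i)
      ((range (μ.rowLen j.rev)).image fun c => hookLen μ (j.rev, c)) := by
    simp only [disjoint_left, mem_image, mem_Iio, mem_range]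
    rintro _ ⟨i, hi, rfl⟩ ⟨c, hc, h⟩
    exact shiftedRowLen_sub_ne_hookLen hi hc h.symm
  have h_union : (Iio j).image (fun i => shiftedRowLen μ N j - shiftedRowLen μ N i) ∪
      (range (μ.rowLen j.rev)).image (fun c => hookLen μ (j.rev, c)) =
        Icc 1 (shiftedRowLen μ N j) := by
    refine eq_of_subset_of_card_le (union_subset ?_ ?_) ?_
    · simp only [image_subset_iff, mem_Iio, mem_Icc]
      intro i hi
      have := shiftedRowLen_strictMono μ N hi
      omega
    · simp only [image_subset_iff, mem_range, mem_Icc]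
      refine fun c hc => ⟨hookLen_pos ?_, hookLen_le_shiftedRowLen hN j c⟩
      exact (YoungDiagram.mem_cells _).2 (YoungDiagram.mem_iff_lt_rowLen.2 hc)
    · rw [card_union_of_disjoint h_disjoint, card_image_of_injOn sub_injOn,
        card_image_of_injOn (hookLen_injOn _), Fin.card_Iio, card_range, Nat.card_Icc,
        Nat.add_sub_cancel, shiftedRowLen, add_comm]
  rw [← h_union, prod_union h_disjoint, prod_image sub_injOn, prod_image (hookLen_injOn _)]

theorem prod_sub_mul_prod_content {M : Type*} [CommMonoid M] (j : Fin N) (F : ℕ → M) :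
    (∏ i ∈ Iio j, F (j - i)) * ∏ c ∈ range (μ.rowLen j.rev), F (N + c - j.rev) =
      ∏ m ∈ Icc 1 (shiftedRowLen μ N j), F m := by
  have h_Iio : ∏ i ∈ Iio j, F (j - i) = ∏ m ∈ range j, F (m + 1) := by
    rw [← prod_range_reflect, ← Nat.Iio_eq_range, ← Fin.map_valEmbedding_Iio, prod_map]
    refine prod_congr rfl fun i hi => congrArg F ?_
    have : i < j := mem_Iio.1 hi
    simp only [Fin.valEmbedding_apply]
    omega
  have h_range : ∏ c ∈ range (μ.rowLen j.rev), F (N + c - j.rev) =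
      ∏ c ∈ range (μ.rowLen j.rev), F (j + c + 1) :=
    prod_congr rfl fun c _ => congrArg F (by rw [Fin.val_rev]; omega)
  rw [h_Iio, h_range, ← prod_range_add, shiftedRowLen, add_comm, range_eq_Ico, prod_Ico_add']
  rfl

theorem prod_cells {M : Type*} [CommMonoid M] (hN : μ.card ≤ N) (f : ℕ × ℕ → M) :
    ∏ c ∈ μ.cells, f c = ∏ j : Fin N, ∏ c ∈ range (μ.rowLen j.rev), f (j.rev, c) := by
  rw [← Equiv.prod_comp Fin.revPerm, prod_sigma']
  symm
  refine prod_bij (fun p _ => (p.1, p.2)) ?_ ?_ ?_ ?_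
  · rintro ⟨i, c⟩ hp
    rw [YoungDiagram.mem_cells]
    simpa [YoungDiagram.mem_iff_lt_rowLen] using hp
  · rintro ⟨i, c⟩ - ⟨i', c'⟩ - h
    obtain ⟨h_fst, h_snd⟩ := Prod.mk.inj h
    obtain rfl := Fin.ext h_fst
    obtain rfl : c = c' := h_snd
    rfl
  · rintro ⟨i, c⟩ hc
    rw [YoungDiagram.mem_cells, YoungDiagram.mem_iff_lt_rowLen] at hc
    have hi := (lt_rowLen_iff_lt_colLen.1 hc).trans_le (colLen_le hN c)
    exact ⟨⟨⟨i, hi⟩, c⟩, by simpa using hc, rfl⟩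
  · simp

end Hooks

section HookFormula

variable {N : ℕ} {R : Type*} [CommRing R]

theorem pow_nInv {μ : YoungDiagram} (hN : μ.card ≤ N) (t : R) :
    t ^ nInv μ = ∏ j : Fin N, t ^ (j.rev * μ.rowLen j.rev : ℕ) := by
  rw [nInv, ← prod_pow_eq_pow_sum, prod_cells hN]
  simp only [prod_const, card_range, pow_mul]

theorem alternant_pow (t : R) {l : Fin N → ℕ} (hl : Monotone l) :
    alternant (fun k => t ^ (k : ℕ)) l =
      ∏ j, (t ^ (j.rev * l j : ℕ) * ∏ i ∈ Iio j, (t ^ (l j - l i) - 1)) := by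
  have alternant_eq_det_vandermonde :
      alternant (fun k => t ^ (k : ℕ)) l = (Matrix.vandermonde fun i => t ^ l i).det :=
    congrArg Matrix.det (Matrix.ext fun i k => pow_right_comm t k (l i))
  have sub_eq {i j : Fin N} (hij : j ∈ Ioi i) :
      t ^ l j - t ^ l i = t ^ l i * (t ^ (l j - l i) - 1) := by
    rw [mul_sub, ← pow_add, Nat.add_sub_cancel' (hl (mem_Ioi.1 hij).le), mul_one]
  have prod_pow (i : Fin N) : ∏ _j ∈ Ioi i, t ^ l i = t ^ (i.rev * l i : ℕ) := by
    rw [prod_const, Fin.card_Ioi, ← pow_mul, mul_comm, Fin.val_rev]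
    congr 2
    omega
  rw [alternant_eq_det_vandermonde, Matrix.det_vandermonde,
    prod_congr rfl fun i _ => prod_congr rfl fun _ => sub_eq (i := i)]
  simp only [prod_mul_distrib, prod_pow]
  rw [prod_comm' (s' := Iio) (t' := univ) (by simp)]

/-- Row by row, both products of binomials complete to `∏ m ∈ Icc 1 β_j, (t ^ m - 1)`. -/
theorem alternant_pow_shiftedRowLen_mul_prod_hookLen {μ : YoungDiagram} (hN : μ.card ≤ N) (t : R) :
    alternant (fun k : Fin N => t ^ (k : ℕ)) (shiftedRowLen μ N) *
        ∏ c ∈ μ.cells, (t ^ hookLen μ c - 1) =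
      alternant (fun k : Fin N => t ^ (k : ℕ)) (fun i => i) * t ^ nInv μ *
        ∏ c ∈ μ.cells, (t ^ (N + c.2 - c.1) - 1) := by
  rw [alternant_pow t (shiftedRowLen_strictMono μ N).monotone, alternant_pow t fun _ _ h => h,
    prod_cells hN, prod_cells hN, pow_nInv hN]
  simp only [← prod_mul_distrib]
  refine prod_congr rfl fun j _ => ?_
  have h_row := (prod_shiftedRowLen_sub_mul_prod_hookLen hN j fun m => t ^ m - 1).trans
    (prod_sub_mul_prod_content j fun m => t ^ m - 1).symm
  rw [mul_assoc, h_row, shiftedRowLen, mul_add, pow_add]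
  ring

end HookFormula

section HookContent

variable {α F : Type*} [Fintype α] [Field F]

theorem ne_zero_of_injective_pow {t : F} (ht : Function.Injective fun k : ℕ => t ^ k) :
    t ≠ 0 := by
  rintro rfl
  exact absurd (@ht 1 2 (by simp)) (by norm_num)

theorem pow_ne_one_of_injective_pow {t : F} (ht : Function.Injective fun k : ℕ => t ^ k) {k : ℕ}
    (hk : 0 < k) : t ^ k ≠ 1 := fun h => hk.ne' (ht (h.trans (pow_zero t).symm))

theorem cyclePowerSum_pow {t : F} (ht : Function.Injective fun k : ℕ => t ^ k) (w : Equiv.Perm α)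
    (N : ℕ) :
    cyclePowerSum w (fun k : Fin N => t ^ (k : ℕ)) =
      ∏ o : Cycles w, ((t ^ N) ^ o.length - 1) / (t ^ o.length - 1) := by
  refine prod_congr rfl fun o _ => ?_
  rw [pow_right_comm, ← geom_sum_eq (pow_ne_one_of_injective_pow ht o.length_pos),
    ← Fin.sum_univ_eq_sum_range]
  exact sum_congr rfl fun i _ => pow_right_comm t i o.length

theorem alternant_pow_val_ne_zero {t : F} (ht : Function.Injective fun k : ℕ => t ^ k) (N : ℕ) :
    alternant (fun k : Fin N => t ^ (k : ℕ)) (fun i => i) ≠ 0 := by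
  have alternant_eq : alternant (fun k : Fin N => t ^ (k : ℕ)) (fun i => i) =
      (Matrix.vandermonde fun k : Fin N => t ^ (k : ℕ)).det :=
    (Matrix.det_transpose _).symm
  rw [alternant_eq, Matrix.det_vandermonde_ne_zero_iff]
  exact ht.comp Fin.val_injective

variable [DecidableEq α]

theorem sum_frobeniusCharacter_mul_prod_cycles {μ : YoungDiagram} (hμ : μ.card = Fintype.card α)
    {N : ℕ} (hN : μ.card ≤ N) {t : F} (ht : Function.Injective fun k : ℕ => t ^ k) :
    ∑ w : Equiv.Perm α, (frobeniusCharacter (shiftedRowLen μ N) w : F) *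
        ∏ o : Cycles w, ((t ^ N) ^ o.length - 1) / (t ^ o.length - 1) =
      (Fintype.card α).factorial * t ^ nInv μ *
        ∏ c ∈ μ.cells, (t ^ N * t ^ content c - 1) / (t ^ hookLen μ c - 1) := by
  have ht0 : t ≠ 0 := ne_zero_of_injective_pow ht
  have prod_hookLen_ne_zero : ∏ c ∈ μ.cells, (t ^ hookLen μ c - 1) ≠ 0 :=
    prod_ne_zero_iff.2 fun c hc =>
      sub_ne_zero.2 (pow_ne_one_of_injective_pow ht (hookLen_pos hc))
  have pow_mul_zpow_content {c : ℕ × ℕ} (hc : c ∈ μ.cells) :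
      t ^ N * t ^ content c = t ^ (N + c.2 - c.1) := by
    have h_col := (YoungDiagram.mem_iff_lt_colLen.1 ((YoungDiagram.mem_cells c).1 hc)).trans_le
      (colLen_le hN c.2)
    rw [← zpow_natCast, ← zpow_natCast, ← zpow_add₀ ht0, content]
    congr 1
    omega
  simp only [← cyclePowerSum_pow ht]
  rw [prod_congr rfl fun c hc => by rw [pow_mul_zpow_content hc], prod_div_distrib, mul_div_assoc',
    eq_div_iff prod_hookLen_ne_zero]
  refine mul_right_cancel₀ (alternant_pow_val_ne_zero ht N) ?_
  have frobenius := sum_frobeniusCharacter_mul_alternant (α := α) (fun k : Fin N => t ^ (k : ℕ))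
    (hμ ▸ sum_shiftedRowLen hN)
  have hook := alternant_pow_shiftedRowLen_mul_prod_hookLen hN t
  linear_combination (∏ c ∈ μ.cells, (t ^ hookLen μ c - 1)) * frobenius +
    ((Fintype.card α).factorial : F) * hook

end HookContent

section Interpolation

open Polynomial hiding content

variable {F : Type*} [Field F] {n : ℕ} {μ : YoungDiagram} {χ : Equiv.Perm (Fin n) → ℤ}

/-- Both sides are polynomials in `a`, and they agree at `a = t ^ N` for all `N ≥ n`. -/
theorem IsIrrCharOf.sum_mul_prod_cycles
    (hχ : IsIrrCharOf n μ.rowLens μ.transpose.rowLens χ) (hμ : μ.card = n) {t : F}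
    (ht : Function.Injective fun k : ℕ => t ^ k) (a : F) :
    ∑ w : Equiv.Perm (Fin n), (χ w : F) *
        ∏ o : Cycles w, (a ^ o.length - 1) / (t ^ o.length - 1) =
      n.factorial * t ^ nInv μ *
        ∏ c ∈ μ.cells, (a * t ^ content c - 1) / (t ^ hookLen μ c - 1) := by
  let P : F[X] := ∑ w : Equiv.Perm (Fin n), C (χ w : F) *
    ∏ o : Cycles w, (X ^ o.length - 1) * C (t ^ o.length - 1)⁻¹
  let Q : F[X] := C (n.factorial * t ^ nInv μ) *
    ∏ c ∈ μ.cells, (X * C (t ^ content c) - 1) * C (t ^ hookLen μ c - 1)⁻¹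
  have eval_P (b : F) : P.eval b = ∑ w : Equiv.Perm (Fin n), (χ w : F) *
      ∏ o : Cycles w, (b ^ o.length - 1) / (t ^ o.length - 1) := by
    simp [P, eval_finsetSum, eval_prod, div_eq_mul_inv]
  have eval_Q (b : F) : Q.eval b = n.factorial * t ^ nInv μ *
      ∏ c ∈ μ.cells, (b * t ^ content c - 1) / (t ^ hookLen μ c - 1) := by
    simp [Q, eval_prod, div_eq_mul_inv, mul_comm b]
  have P_eq_Q : P = Q := by
    refine eq_of_infinite_eval_eq P Q ?_
    refine ((Set.Ici_infinite n).image ht.injOn).mono ?_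
    rintro _ ⟨N, hN, rfl⟩
    have h := sum_frobeniusCharacter_mul_prod_cycles (hμ.trans (Fintype.card_fin n).symm)
      (hμ.trans_le hN) ht
    rw [Fintype.card_fin, ← hχ.eq_frobeniusCharacter hμ hN] at h
    exact (eval_P _).trans (h.trans (eval_Q _).symm)
  rw [← eval_P, ← eval_Q, P_eq_Q]

end Interpolation

theorem mul_zpow_sub_one_div_eq {F : Type*} [Field F] {q : F} (hq : q ≠ 0) (c : ℤ) (h : ℕ) :
    (q * (q ^ 2) ^ c - 1) / ((q ^ 2) ^ h - 1) = (1 - q ^ (2 * c + 1)) / (1 - q ^ (2 * h)) := by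
  rw [← neg_div_neg_eq, neg_sub, neg_sub, pow_mul, zpow_add_one₀ hq, zpow_mul, zpow_ofNat,
    mul_comm q]

theorem card_BElt (n : ℕ) : Fintype.card (BElt n) = 2 ^ n * n.factorial := by
  simp [Fintype.card_perm, mul_comm]

theorem statement9_general {F : Type*} [Field F] {n : ℕ} {μ : YoungDiagram} (hμ : μ.card = n)
    {χ : Equiv.Perm (Fin n) → ℤ} (hχ : IsIrrCharOf n μ.rowLens μ.transpose.rowLens χ) {q : F}
    (hq : Function.Injective fun k : ℕ => q ^ k) (hcard : (Fintype.card (BElt n) : F) ≠ 0) :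
    (q - 1) ^ n * (Fintype.card (BElt n) : F)⁻¹ *
        ∑ p : BElt n, (χ p.1 : F) * (1 - signedPermMatrix F p).det /
          (1 - q • signedPermMatrix F p).det =
      (q - 1) ^ n * q ^ (2 * nInv μ) *
        ∏ c ∈ μ.cells, (1 - q ^ (2 * content c + 1)) / (1 - q ^ (2 * hookLen μ c)) := by
  have hq_sq : Function.Injective fun k : ℕ => (q ^ 2) ^ k := by
    simp only [← pow_mul]
    exact hq.comp (mul_right_injective₀ two_ne_zero)
  have cell_eq (c : ℕ × ℕ) :=
    mul_zpow_sub_one_div_eq (ne_zero_of_injective_pow hq) (content c) (hookLen μ c)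
  rw [sum_mul_det_div_det (fun w => (χ w : F)) fun k hk => pow_ne_one_of_injective_pow hq hk,
    hχ.sum_mul_prod_cycles hμ hq_sq, Fintype.card_fin, mul_assoc ((q - 1) ^ n),
    mul_assoc ((q - 1) ^ n)]
  congr 1
  rw [inv_mul_eq_iff_eq_mul₀ hcard, card_BElt, pow_mul q 2 (nInv μ)]
  simp only [cell_eq]
  push_cast
  ring

theorem ratFunc_X_pow_injective {F : Type*} [Field F] :
    Function.Injective fun k : ℕ => (RatFunc.X : RatFunc F) ^ k := by
  intro k k' h
  simp only [← RatFunc.algebraMap_X, ← map_pow] at h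
  have h_natDegree := congrArg Polynomial.natDegree (RatFunc.algebraMap_injective F h)
  simpa only [Polynomial.natDegree_X_pow] using h_natDegree

/-- Here `μ` is the Young diagram of the partition `λ ⊢ n`, `χ` is the
character of the irreducible `S_n`-representation `σ_λ`, and `[λ×∅]` is its pullback
through `W(B_n) → S_n`; `q = X ∈ ℚ(q)`. -/
theorem statement9 (n : ℕ) (μ : YoungDiagram) (hcard : μ.card = n)
    (χ : Equiv.Perm (Fin n) → ℤ)
    (hχ : IsIrrCharOf n (↑μ.rowLens : Multiset ℕ) (↑μ.transpose.rowLens : Multiset ℕ) χ) :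
    ((RatFunc.X : K) - 1) ^ n * ((Fintype.card (BElt n) : K))⁻¹ *
        ∑ p : BElt n, ((χ p.1 : ℤ) : K) *
          Matrix.det ((1 : Matrix (Fin n) (Fin n) K) - BMat n p) /
          Matrix.det ((1 : Matrix (Fin n) (Fin n) K) - (RatFunc.X : K) • BMat n p)
      = ((RatFunc.X : K) - 1) ^ n * (RatFunc.X : K) ^ (2 * nInv μ) *
          ∏ c ∈ μ.cells,
            (1 - (RatFunc.X : K) ^ (2 * content c + 1)) /
              (1 - (RatFunc.X : K) ^ (2 * hookLen μ c)) :=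
  statement9_general hcard hχ ratFunc_X_pow_injective (Nat.cast_ne_zero.2 Fintype.card_ne_zero)
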